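/- Fix an integer d ≥ 2 and δ ∈ (0,1). Let a^{jk} : ℝ → ℝ (1 ≤ j,k ≤ d) be smooth functions of x¹ only, with a^{jk} = a^{kj} and δ|θ|² ≤ Σ_{j,k=1}^d a^{jk}(x¹) θ^j θ^k ≤ δ⁻¹|θ|² for all x¹ and θ ∈ ℝ^d. Set L₀v = v_t + Σ_{j,k} a^{jk}(x¹) v_{x^j x^k}. Let κ ≥ 4 and r > 0, let u : ℝ^{d+1} → ℝ be smooth with compact support, and let h be smooth on an open neighborhood of the closure of Q_{κr} with L₀h = 0 in Q_{κr} and h = u on the parabolic boundary ∂'Q_{κr} = ([0,(κr)²] × ∂B_{κr}) ∪ ({(κr)²} × B_{κr}). Then there is N = N(d,δ) such that, for w = h_t and for each w = h_{x^j x^k} with 1 ≤ j ≤ d and 2 ≤ k ≤ d: ⨍_{Q_r} |w − (w)_{Q_r}|² dx dt ≤ N κ^{-2} [ (|L₀u|²)_{Q_{κr}} + (|u_{xx}|²)_{Q_{κr}} ]. -/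

import Mathlib

open MeasureTheory

/-- Partial derivative in `t`. -/
noncomputable def pdt {d : ℕ} (u : ℝ × (Fin d → ℝ) → ℝ) : ℝ × (Fin d → ℝ) → ℝ :=
  fun p => fderiv ℝ u p (1, 0)

/-- Partial derivative in `x^j`. -/
noncomputable def pdx {d : ℕ} (j : Fin d) (u : ℝ × (Fin d → ℝ) → ℝ) :
    ℝ × (Fin d → ℝ) → ℝ :=
  fun p => fderiv ℝ u p (0, Pi.single j 1)

/-- Second partial derivative in `x^j, x^k`. -/
noncomputable def pdxx {d : ℕ} (j k : Fin d) (u : ℝ × (Fin d → ℝ) → ℝ) :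
    ℝ × (Fin d → ℝ) → ℝ :=
  pdx j (pdx k u)

/-- Open Euclidean ball `B_r ⊂ ℝ^d` centered at the origin. -/
def ballE (d : ℕ) (r : ℝ) : Set (Fin d → ℝ) := {x | ∑ j, (x j) ^ 2 < r ^ 2}

/-- Euclidean sphere `∂B_r ⊂ ℝ^d` centered at the origin. -/
def sphereE (d : ℕ) (r : ℝ) : Set (Fin d → ℝ) := {x | ∑ j, (x j) ^ 2 = r ^ 2}

/-- Parabolic cylinder `Q_r = (0,r²) × B_r`. -/
def Qc (d : ℕ) (r : ℝ) : Set (ℝ × (Fin d → ℝ)) := Set.Ioo 0 (r ^ 2) ×ˢ ballE d r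

/-- Parabolic boundary `∂'Q_r = ([0,r²] × ∂B_r) ∪ ({r²} × B_r)`. -/
def pbQc (d : ℕ) (r : ℝ) : Set (ℝ × (Fin d → ℝ)) :=
  (Set.Icc 0 (r ^ 2) ×ˢ sphereE d r) ∪ (({r ^ 2} : Set ℝ) ×ˢ ballE d r)

/-- Average of `f` over a set `s` (of finite positive measure). -/
noncomputable def avg {d : ℕ} (s : Set (ℝ × (Fin d → ℝ)))
    (f : ℝ × (Fin d → ℝ) → ℝ) : ℝ :=
  ((volume s).toReal)⁻¹ * ∫ p in s, f p



/-- smooth functions -/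
abbrev Sm {d : ℕ} (f : ℝ × (Fin d → ℝ) → ℝ) : Prop := ContDiff ℝ (⊤ : ℕ∞) f

section basics
variable {d : ℕ} {f g : ℝ × (Fin d → ℝ) → ℝ}

lemma Sm.diff (hf : Sm f) : Differentiable ℝ f := hf.differentiable (by simp)

lemma Sm.dir (hf : Sm f) (e : ℝ × (Fin d → ℝ)) : Sm (fun p => fderiv ℝ f p e) := by
  have : ContDiff ℝ (⊤ : ℕ∞) (fderiv ℝ f) := hf.fderiv_right (by simp)
  exact this.clm_apply contDiff_const

lemma Sm.pdx (hf : Sm f) (j : Fin d) : Sm (pdx j f) := hf.dir _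
lemma Sm.pdt (hf : Sm f) : Sm (pdt f) := hf.dir _
lemma Sm.pdxx (hf : Sm f) (j k : Fin d) : Sm (pdxx j k f) := (hf.pdx k).pdx j
lemma Sm.cont (hf : Sm f) : Continuous f := hf.continuous
lemma Sm.mul' (hf : Sm f) (hg : Sm g) : Sm (fun p => f p * g p) := hf.mul hg
lemma Sm.add' (hf : Sm f) (hg : Sm g) : Sm (fun p => f p + g p) := hf.add hg
lemma Sm.sub' (hf : Sm f) (hg : Sm g) : Sm (fun p => f p - g p) := hf.sub hg

lemma dir_comm (hf : Sm f) (e e' p : ℝ × (Fin d → ℝ)) :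
    fderiv ℝ (fun q => fderiv ℝ f q e) p e' = fderiv ℝ (fun q => fderiv ℝ f q e') p e := by
  have h1 : ContDiff ℝ (⊤ : ℕ∞) (fderiv ℝ f) := hf.fderiv_right (by simp)
  have h2 : DifferentiableAt ℝ (fderiv ℝ f) p := (h1.differentiable (by simp)) p
  have hs : IsSymmSndFDerivAt ℝ f p := (hf.contDiffAt).isSymmSndFDerivAt (by
    rw [minSmoothness_of_isRCLikeNormedField]; exact WithTop.coe_le_coe.2 (le_top : (2:ℕ∞) ≤ ⊤))
  rw [fderiv_clm_apply h2 (differentiableAt_const _), fderiv_clm_apply h2 (differentiableAt_const _)]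
  simp
  exact hs e' e

lemma pdx_pdx (hf : Sm f) (j k : Fin d) : pdx j (pdx k f) = pdx k (pdx j f) := by
  funext p; exact dir_comm hf _ _ p
lemma pdx_pdt (hf : Sm f) (j : Fin d) : pdx j (pdt f) = pdt (pdx j f) := by
  funext p; exact dir_comm hf _ _ p

lemma pdx_mul (hf : Sm f) (hg : Sm g) (k : Fin d) :
    pdx k (fun p => f p * g p) = fun p => f p * pdx k g p + pdx k f p * g p := by
  funext p
  simp only [pdx]
  rw [fderiv_fun_mul (hf.diff p) (hg.diff p)]
  simp [mul_comm]
lemma pdt_mul (hf : Sm f) (hg : Sm g) :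
    pdt (fun p => f p * g p) = fun p => f p * pdt g p + pdt f p * g p := by
  funext p
  simp only [pdt]
  rw [fderiv_fun_mul (hf.diff p) (hg.diff p)]
  simp [mul_comm]
lemma pdx_add (hf : Sm f) (hg : Sm g) (k : Fin d) :
    pdx k (fun p => f p + g p) = fun p => pdx k f p + pdx k g p := by
  funext p
  simp only [pdx]
  rw [fderiv_fun_add (hf.diff p) (hg.diff p)]; rfl
lemma pdt_add (hf : Sm f) (hg : Sm g) :
    pdt (fun p => f p + g p) = fun p => pdt f p + pdt g p := by
  funext p
  simp only [pdt]
  rw [fderiv_fun_add (hf.diff p) (hg.diff p)]; rfl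
lemma pdx_sub (hf : Sm f) (hg : Sm g) (k : Fin d) :
    pdx k (fun p => f p - g p) = fun p => pdx k f p - pdx k g p := by
  funext p
  simp only [pdx]
  rw [fderiv_fun_sub (hf.diff p) (hg.diff p)]; rfl
lemma pdt_sub (hf : Sm f) (hg : Sm g) :
    pdt (fun p => f p - g p) = fun p => pdt f p - pdt g p := by
  funext p
  simp only [pdt]
  rw [fderiv_fun_sub (hf.diff p) (hg.diff p)]; rfl
lemma pdx_sum {ι : Type*} (s : Finset ι) {F : ι → ℝ × (Fin d → ℝ) → ℝ} (hF : ∀ i, Sm (F i))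
    (k : Fin d) : pdx k (fun p => ∑ i ∈ s, F i p) = fun p => ∑ i ∈ s, pdx k (F i) p := by
  funext p
  simp only [pdx]
  rw [fderiv_fun_sum (fun i _ => (hF i).diff p)]; simp
lemma pdt_sum {ι : Type*} (s : Finset ι) {F : ι → ℝ × (Fin d → ℝ) → ℝ} (hF : ∀ i, Sm (F i)) :
    pdt (fun p => ∑ i ∈ s, F i p) = fun p => ∑ i ∈ s, pdt (F i) p := by
  funext p
  simp only [pdt]
  rw [fderiv_fun_sum (fun i _ => (hF i).diff p)]; simp
lemma Sm.sum' {ι : Type*} {s : Finset ι} {F : ι → ℝ × (Fin d → ℝ) → ℝ} (hF : ∀ i, Sm (F i)) :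
    Sm (fun p => ∑ i ∈ s, F i p) := ContDiff.sum (fun i _ => hF i)
lemma pdx_const (c : ℝ) (k : Fin d) : pdx k (fun _ => c) = fun _ => 0 := by
  funext p; simp [pdx]
lemma pdt_const (c : ℝ) : pdt (d := d) (fun _ => c) = fun _ => 0 := by
  funext p; simp [pdt]

/-- functions of one space coordinate -/
lemma Sm.coord {b : ℝ → ℝ} (hb : ContDiff ℝ (⊤ : ℕ∞) b) (o : Fin d) :
    Sm (fun p : ℝ × (Fin d → ℝ) => b (p.2 o)) := by
  apply hb.comp; fun_prop

lemma fderiv_coord {b : ℝ → ℝ} (hb : ContDiff ℝ (⊤ : ℕ∞) b) (o : Fin d)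
    (p e : ℝ × (Fin d → ℝ)) :
    fderiv ℝ (fun p : ℝ × (Fin d → ℝ) => b (p.2 o)) p e = e.2 o * deriv b (p.2 o) := by
  have h1 : HasDerivAt b (deriv b (p.2 o)) (p.2 o) :=
    ((hb.differentiable (by simp)) _).hasDerivAt
  have h2 : HasFDerivAt (fun p : ℝ × (Fin d → ℝ) => p.2 o)
    ((ContinuousLinearMap.proj o).comp (ContinuousLinearMap.snd ℝ ℝ (Fin d → ℝ))) p :=
    ((ContinuousLinearMap.proj (R := ℝ) (φ := fun _ : Fin d => ℝ) o).comp
      (ContinuousLinearMap.snd ℝ ℝ (Fin d → ℝ))).hasFDerivAt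
  have h3 := h1.comp_hasFDerivAt p h2
  have := h3.fderiv
  simp only [Function.comp_def] at this
  rw [this]; simp [mul_comm]

lemma pdx_coord {b : ℝ → ℝ} (hb : ContDiff ℝ (⊤ : ℕ∞) b) {o k : Fin d} (hk : k ≠ o) :
    pdx k (fun p : ℝ × (Fin d → ℝ) => b (p.2 o)) = fun _ => 0 := by
  funext p; simp only [pdx]; rw [fderiv_coord hb]; simp [hk.symm]
lemma pdt_coord {b : ℝ → ℝ} (hb : ContDiff ℝ (⊤ : ℕ∞) b) (o : Fin d) :
    pdt (fun p : ℝ × (Fin d → ℝ) => b (p.2 o)) = fun _ => 0 := by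
  funext p; simp only [pdt]; rw [fderiv_coord hb]; simp
lemma pdx_coord_self (o : Fin d) :
    pdx o (fun p : ℝ × (Fin d → ℝ) => p.2 o) = fun _ => 1 := by
  funext p; simp only [pdx]; rw [fderiv_coord (b := fun s => s) contDiff_id]; simp

lemma isOpen_ballE (d : ℕ) (r : ℝ) : IsOpen (ballE d r) :=
  isOpen_lt (by fun_prop) (by fun_prop)
lemma isOpen_Qc (d : ℕ) (r : ℝ) : IsOpen (Qc d r) := isOpen_Ioo.prod (isOpen_ballE d r)
lemma ballE_sub {r : ℝ} (hr : 0 ≤ r) : ballE d r ⊆ Metric.closedBall 0 r := by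
  intro x hx
  rw [mem_closedBall_zero_iff, pi_norm_le_iff_of_nonneg hr]
  intro i
  have h1 : (x i)^2 ≤ ∑ j, (x j)^2 :=
    Finset.single_le_sum (f := fun j => (x j)^2) (fun j _ => sq_nonneg _) (Finset.mem_univ i)
  have h2 : ∑ j, (x j)^2 < r^2 := hx
  rw [Real.norm_eq_abs]
  exact abs_le_of_sq_le_sq (by linarith) hr
lemma Qc_sub {r : ℝ} (hr : 0 ≤ r) :
    Qc d r ⊆ Set.Icc 0 (r^2) ×ˢ Metric.closedBall 0 r :=
  Set.prod_mono Set.Ioo_subset_Icc_self (ballE_sub hr)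
lemma intOn {r : ℝ} (hr : 0 ≤ r) (hf : Continuous f) : IntegrableOn f (Qc d r) :=
  (hf.continuousOn.integrableOn_compact (isCompact_Icc.prod (isCompact_closedBall _ _))).mono_set
    (Qc_sub hr)
lemma Qc_mono {r s : ℝ} (hr : 0 ≤ r) (h : r ≤ s) : Qc d r ⊆ Qc d s := by
  rintro ⟨t, x⟩ ⟨ht, hx⟩
  have h2 : r^2 ≤ s^2 := by gcongr
  refine ⟨⟨ht.1, ht.2.trans_le h2⟩, ?_⟩
  have : ∑ j, (x j)^2 < r^2 := hx
  exact lt_of_lt_of_le this h2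
lemma volQ_lt (r : ℝ) (hr : 0 ≤ r) : volume (Qc d r) < ⊤ :=
  lt_of_le_of_lt (measure_mono (Qc_sub hr))
    (isCompact_Icc.prod (isCompact_closedBall _ _)).measure_lt_top
lemma volQ_pos (r : ℝ) (hr : 0 < r) : 0 < volume (Qc d r) := by
  refine (isOpen_Qc d r).measure_pos volume ⟨(r^2/2, 0), ⟨by positivity, by simp; positivity⟩, ?_⟩
  simp [ballE]; positivity

lemma int_mono {r : ℝ} (hr : 0 ≤ r) (hf : Continuous f) (hg : Continuous g)
    (h : ∀ p ∈ Qc d r, f p ≤ g p) : ∫ p in Qc d r, f p ≤ ∫ p in Qc d r, g p :=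
  setIntegral_mono_on (intOn hr hf) (intOn hr hg) (isOpen_Qc d r).measurableSet h
lemma int_mono_set {r s : ℝ} (hr : 0 ≤ r) (h : r ≤ s) (hf : Continuous f) (h0 : ∀ p, 0 ≤ f p) :
    ∫ p in Qc d r, f p ≤ ∫ p in Qc d s, f p :=
  setIntegral_mono_set (intOn (hr.trans h) hf) (Filter.Eventually.of_forall h0)
    (Qc_mono hr h).eventuallyLE
lemma int_add {r : ℝ} (hr : 0 ≤ r) (hf : Continuous f) (hg : Continuous g) :
    ∫ p in Qc d r, (f p + g p) = (∫ p in Qc d r, f p) + ∫ p in Qc d r, g p :=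
  integral_add (intOn hr hf) (intOn hr hg)
lemma int_sub {r : ℝ} (hr : 0 ≤ r) (hf : Continuous f) (hg : Continuous g) :
    ∫ p in Qc d r, (f p - g p) = (∫ p in Qc d r, f p) - ∫ p in Qc d r, g p :=
  integral_sub (intOn hr hf) (intOn hr hg)
lemma int_nonneg {r : ℝ} (h0 : ∀ p, 0 ≤ f p) : 0 ≤ ∫ p in Qc d r, f p :=
  integral_nonneg h0
end basics


lemma hasDerivAt_space {d : ℕ} {F : ℝ × (Fin d → ℝ) → ℝ} (hF : Sm F) (t : ℝ) (x : Fin d → ℝ)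
    (k : Fin d) (s : ℝ) :
    HasDerivAt (fun s => F (t, Function.update x k s)) (pdx k F (t, Function.update x k s)) s := by
  have h1 : HasDerivAt (fun s => ((t, Function.update x k s) : ℝ × (Fin d → ℝ)))
      ((0, Pi.single k 1) : ℝ × (Fin d → ℝ)) s :=
    (hasDerivAt_const s t).prodMk (hasDerivAt_update x k s)
  exact (hF.diff _).hasFDerivAt.comp_hasDerivAt s h1

lemma hasDerivAt_time {d : ℕ} {F : ℝ × (Fin d → ℝ) → ℝ} (hF : Sm F) (x : Fin d → ℝ) (s : ℝ) :
    HasDerivAt (fun s => F (s, x)) (pdt F (s, x)) s := by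
  have h1 : HasDerivAt (fun s => ((s, x) : ℝ × (Fin d → ℝ)))
      ((1, 0) : ℝ × (Fin d → ℝ)) s :=
    (hasDerivAt_id s).prodMk (hasDerivAt_const s x)
  exact (hF.diff _).hasFDerivAt.comp_hasDerivAt s h1

lemma ball_ibp {d : ℕ} {F : ℝ × (Fin d → ℝ) → ℝ} (hF : Sm F) (k : Fin d) {R : ℝ} (hR : 0 < R)
    (t : ℝ) (h0 : ∀ x ∈ sphereE d R, F (t, x) = 0) :
    ∫ x in ballE d R, pdx k F (t, x) = 0 := by
  obtain _ | n := d
  · exact k.elim0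
  have hB := (isOpen_ballE (n+1) R).measurableSet
  rw [← integral_indicator hB]
  set g : (Fin (n+1) → ℝ) → ℝ := (ballE (n+1) R).indicator fun x => pdx k F (t, x) with hg
  have hc : Continuous fun x => pdx k F (t, x) := (hF.pdx k).cont.comp (by fun_prop)
  have hgi : Integrable g := by
    rw [hg, integrable_indicator_iff hB]
    exact (hc.continuousOn.integrableOn_compact (isCompact_closedBall _ _)).mono_set
      (ballE_sub hR.le)
  have mp := (volume_preserving_piFinSuccAbove (fun _ : Fin (n+1) => ℝ) k).symm
  rw [← mp.integral_comp' g, Measure.volume_eq_prod, integral_prod_symm]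
  · apply integral_eq_zero_of_ae
    refine Filter.Eventually.of_forall fun y => ?_
    simp only [Pi.zero_apply]
    have hval : ∀ s : ℝ, (MeasurableEquiv.piFinSuccAbove (fun _ : Fin (n+1) => ℝ) k).symm (s, y)
        = Function.update (k.insertNth 0 y : Fin (n+1) → ℝ) k s := by
      intro s
      simp [MeasurableEquiv.piFinSuccAbove, Fin.insertNthEquiv, Fin.update_insertNth]
    have hsum : ∀ s : ℝ, ∑ j, (Function.update (k.insertNth 0 y : Fin (n+1) → ℝ) k s j)^2
        = s^2 + ∑ j, (y j)^2 := by
      intro s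
      rw [Fin.sum_univ_succAbove _ k]
      simp
    set q := Real.sqrt (R^2 - ∑ j, (y j)^2) with hq
    by_cases hy : ∑ j, (y j)^2 < R^2
    · have hq2 : q^2 = R^2 - ∑ j, (y j)^2 := Real.sq_sqrt (by linarith)
      have hq0 : 0 ≤ q := Real.sqrt_nonneg _
      have : ∀ s, g ((MeasurableEquiv.piFinSuccAbove (fun _ : Fin (n+1) => ℝ) k).symm (s, y))
          = (Set.Ioo (-q) q).indicator
            (fun s => pdx k F (t, Function.update (k.insertNth 0 y : Fin (n+1) → ℝ) k s)) s := by
        intro s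
        rw [hval, hg]
        have : (Function.update (k.insertNth 0 y : Fin (n+1) → ℝ) k s ∈ ballE (n+1) R)
            ↔ s ∈ Set.Ioo (-q) q := by
          simp only [ballE, Set.mem_ofPred_eq, hsum, Set.mem_Ioo]
          rw [← abs_lt, ← sq_lt_sq₀ (abs_nonneg s) hq0, sq_abs, hq2]
          constructor <;> intro h <;> linarith
        simp only [Set.indicator, this]
      simp_rw [this]
      rw [integral_indicator measurableSet_Ioo, ← integral_Ioc_eq_integral_Ioo,
        ← intervalIntegral.integral_of_le (by linarith)]
      rw [intervalIntegral.integral_eq_sub_of_hasDerivAt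
        (fun s _ => hasDerivAt_space hF t (k.insertNth 0 y) k s)]
      · rw [h0, h0]; simp
        · simp only [sphereE, Set.mem_ofPred_eq, hsum]; nlinarith
        · simp only [sphereE, Set.mem_ofPred_eq, hsum]; nlinarith
      · apply Continuous.intervalIntegrable
        exact hc.comp (by fun_prop)
    · have : ∀ s, g ((MeasurableEquiv.piFinSuccAbove (fun _ : Fin (n+1) => ℝ) k).symm (s, y))
          = 0 := by
        intro s
        rw [hval, hg]
        apply Set.indicator_of_notMem
        simp only [ballE, Set.mem_ofPred_eq, hsum]
        nlinarith
      simp_rw [this]; exact integral_zero _ _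
  · exact mp.integrable_comp_of_integrable hgi

lemma ibp_x {d : ℕ} {F : ℝ × (Fin d → ℝ) → ℝ} (hF : Sm F) (k : Fin d) {R : ℝ} (hR : 0 < R)
    (h0 : ∀ p ∈ pbQc d R, F p = 0) :
    ∫ p in Qc d R, pdx k F p = 0 := by
  have hi := intOn hR.le (hF.pdx k).cont
  rw [Measure.volume_eq_prod] at hi ⊢
  rw [Qc, setIntegral_prod _ hi]
  apply setIntegral_eq_zero_of_forall_eq_zero
  intro t ht
  apply ball_ibp hF k hR
  intro x hx
  exact h0 _ (Or.inl ⟨Set.Ioo_subset_Icc_self ht, hx⟩)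

lemma ibp_t {d : ℕ} {F : ℝ × (Fin d → ℝ) → ℝ} (hF : Sm F) {R : ℝ} (hR : 0 < R)
    (h0 : ∀ p ∈ pbQc d R, F p = 0) (h1 : ∀ p, 0 ≤ F p) :
    ∫ p in Qc d R, pdt F p ≤ 0 := by
  have hi := intOn hR.le hF.pdt.cont
  rw [Measure.volume_eq_prod] at hi ⊢
  rw [Qc, ← setIntegral_prod_swap, setIntegral_prod]
  · apply setIntegral_nonpos (isOpen_ballE d R).measurableSet
    intro x hx
    simp only [Prod.swap_prod_mk]
    rw [← integral_Ioc_eq_integral_Ioo,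
        ← intervalIntegral.integral_of_le (by positivity)]
    rw [intervalIntegral.integral_eq_sub_of_hasDerivAt (fun s _ => hasDerivAt_time hF x s)]
    · rw [h0 _ (Or.inr ⟨Set.mem_singleton _, hx⟩)]
      have := h1 (0, x)
      linarith
    · apply Continuous.intervalIntegrable
      exact hF.pdt.cont.comp (by fun_prop)
  · exact hi.swap


section fp
variable {d : ℕ} {f : ℝ × (Fin d → ℝ) → ℝ}
@[fun_prop] lemma cont_pdx (hf : ContDiff ℝ (⊤ : ℕ∞) f) (j : Fin d) : Continuous (pdx j f) :=
  (Sm.pdx hf j).continuous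
@[fun_prop] lemma cont_pdt (hf : ContDiff ℝ (⊤ : ℕ∞) f) : Continuous (pdt f) :=
  (Sm.pdt hf).continuous
@[fun_prop] lemma cont_pdxx (hf : ContDiff ℝ (⊤ : ℕ∞) f) (j k : Fin d) :
    Continuous (pdxx j k f) := (Sm.pdxx hf j k).continuous
@[fun_prop] lemma cd_pdx (hf : ContDiff ℝ (⊤ : ℕ∞) f) (j : Fin d) :
    ContDiff ℝ (⊤ : ℕ∞) (pdx j f) := (Sm.pdx hf j)
@[fun_prop] lemma cd_pdt (hf : ContDiff ℝ (⊤ : ℕ∞) f) :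
    ContDiff ℝ (⊤ : ℕ∞) (pdt f) := (Sm.pdt hf)
@[fun_prop] lemma cd_pdxx (hf : ContDiff ℝ (⊤ : ℕ∞) f) (j k : Fin d) :
    ContDiff ℝ (⊤ : ℕ∞) (pdxx j k f) := (Sm.pdxx hf j k)
end fp

structure Coef {d : ℕ} (o : Fin d) (δ : ℝ) (a : ℝ → Fin d → Fin d → ℝ) : Prop where
  pos : 0 < δ
  lt1 : δ < 1
  sm : ∀ j k, ContDiff ℝ (⊤ : ℕ∞) fun s => a s j k
  symm : ∀ s j k, a s j k = a s k j
  ell : ∀ (s : ℝ) (θ : Fin d → ℝ),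
          δ * ∑ j, (θ j) ^ 2 ≤ ∑ j, ∑ k, a s j k * θ j * θ k ∧
          ∑ j, ∑ k, a s j k * θ j * θ k ≤ δ⁻¹ * ∑ j, (θ j) ^ 2

noncomputable def Lop {d : ℕ} (o : Fin d) (a : ℝ → Fin d → Fin d → ℝ)
    (w : ℝ × (Fin d → ℝ) → ℝ) : ℝ × (Fin d → ℝ) → ℝ :=
  fun p => pdt w p + ∑ j, ∑ k, a (p.2 o) j k * pdxx j k w p
noncomputable def cc {d : ℕ} (o : Fin d) (a : ℝ → Fin d → Fin d → ℝ) :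
    ℝ × (Fin d → ℝ) → ℝ := fun p => (a (p.2 o) o o)⁻¹
noncomputable def bb {d : ℕ} (o : Fin d) (a : ℝ → Fin d → Fin d → ℝ) (j k : Fin d) :
    ℝ × (Fin d → ℝ) → ℝ := fun p => a (p.2 o) j k * (a (p.2 o) o o)⁻¹
def sig {d : ℕ} (o j k : Fin d) : Fin d := if k = o then j else k
def tau {d : ℕ} (o j k : Fin d) : Fin d := if k = o then k else j

namespace Coef
variable {d : ℕ} {o : Fin d} {δ : ℝ} {a : ℝ → Fin d → Fin d → ℝ} (C : Coef o δ a)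
include C

lemma diag (s : ℝ) (i : Fin d) : δ ≤ a s i i ∧ a s i i ≤ δ⁻¹ := by
  have := C.ell s (Pi.single i 1)
  simpa [Pi.single_apply] using this

lemma abs_le (s : ℝ) (j k : Fin d) : |a s j k| ≤ δ⁻¹ := by
  by_cases h : j = k
  · subst h
    rw [abs_of_nonneg (C.pos.le.trans (C.diag s j).1)]; exact (C.diag s j).2
  have key : ∀ e : ℝ, ∑ i, ∑ l, a s i l * (Pi.single j 1 + Pi.single k e : Fin d → ℝ) i *
      (Pi.single j 1 + Pi.single k e : Fin d → ℝ) l = a s j j + 2 * e * a s j k + e^2 * a s k k := by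
    intro e
    have inner : ∀ i (X : ℝ), ∑ l, a s i l * X * (Pi.single j 1 + Pi.single k e : Fin d → ℝ) l =
       X * (a s i j + e * a s i k) := by
      intro i X
      simp only [Pi.add_apply, mul_add, Finset.sum_add_distrib]
      simp [Pi.single_apply]
      ring
    rw [Finset.sum_congr rfl fun i _ => inner i _]
    simp only [Pi.add_apply, add_mul, Finset.sum_add_distrib]
    simp [Pi.single_apply]
    rw [C.symm s k j]; ring
  have h1 := (C.ell s (Pi.single j 1 + Pi.single k 1)).1
  have h2 := (C.ell s (Pi.single j 1 + Pi.single k (-1))).1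
  rw [key] at h1 h2
  have p1 : 0 ≤ δ * ∑ i, ((Pi.single j 1 + Pi.single k 1 : Fin d → ℝ) i)^2 :=
    mul_nonneg C.pos.le (Finset.sum_nonneg fun _ _ => sq_nonneg _)
  have p2 : 0 ≤ δ * ∑ i, ((Pi.single j 1 + Pi.single k (-1) : Fin d → ℝ) i)^2 :=
    mul_nonneg C.pos.le (Finset.sum_nonneg fun _ _ => sq_nonneg _)
  have := (C.diag s j).2
  have := (C.diag s k).2
  rw [_root_.abs_le]; constructor <;> nlinarith

lemma a_pos (s : ℝ) : 0 < a s o o := C.pos.trans_le (C.diag s o).1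
lemma cd_inv : ContDiff ℝ (⊤ : ℕ∞) fun s => (a s o o)⁻¹ :=
  (C.sm o o).inv fun s => (C.a_pos s).ne'
lemma cc_sm : Sm (cc o a) := Sm.coord C.cd_inv o
lemma cd_b (j k : Fin d) : ContDiff ℝ (⊤ : ℕ∞) fun s => a s j k * (a s o o)⁻¹ :=
  (C.sm j k).mul C.cd_inv
lemma bb_sm (j k : Fin d) : Sm (bb o a j k) := Sm.coord (C.cd_b j k) o
lemma cc_ge (p) : δ ≤ cc o a p := by
  have := (C.diag (p.2 o) o).2
  rw [cc, le_inv_comm₀ C.pos (C.a_pos _)]; exact this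
lemma cc_le (p) : cc o a p ≤ δ⁻¹ := by
  have := (C.diag (p.2 o) o).1
  exact inv_anti₀ C.pos this
lemma bb_abs (j k : Fin d) (p) : |bb o a j k p| ≤ δ⁻¹^2 := by
  rw [bb, abs_mul, sq]
  have h1 := C.cc_le p
  have h2 := C.cc_ge p
  have := C.pos
  rw [cc] at h1 h2
  rw [abs_of_nonneg (a := (a (p.2 o) o o)⁻¹) (by linarith)]
  exact mul_le_mul (C.abs_le _ j k) h1 (by linarith) (by positivity)
lemma bb_ell (p) (θ : Fin d → ℝ) :
    δ^2 * ∑ j, (θ j)^2 ≤ ∑ j, ∑ k, bb o a j k p * (θ j * θ k) := by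
  have h : ∑ j, ∑ k, bb o a j k p * (θ j * θ k)
      = cc o a p * ∑ j, ∑ k, a (p.2 o) j k * θ j * θ k := by
    simp only [Finset.mul_sum, bb, cc]
    refine Finset.sum_congr rfl fun j _ => Finset.sum_congr rfl fun k _ => by ring
  rw [h, sq, mul_assoc]
  have h0 : 0 ≤ δ * ∑ j, (θ j)^2 :=
    mul_nonneg C.pos.le (Finset.sum_nonneg fun _ _ => sq_nonneg _)
  exact mul_le_mul (C.cc_ge p) (C.ell (p.2 o) θ).1 h0 (C.pos.le.trans (C.cc_ge p))
lemma bb_oo (p) : bb o a o o p = 1 := mul_inv_cancel₀ (C.a_pos _).ne'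
lemma pdt_cc : pdt (cc o a) = fun _ => 0 := pdt_coord C.cd_inv o
lemma pdx_cc {k : Fin d} (hk : k ≠ o) : pdx k (cc o a) = fun _ => 0 := pdx_coord C.cd_inv hk
lemma pdx_bb (j k : Fin d) : pdx (sig o j k) (bb o a j k) = fun _ => 0 := by
  unfold sig
  split_ifs with h
  · subst h
    by_cases h' : j = k
    · subst h'
      have : bb j a j j = fun _ => 1 := by funext p; exact C.bb_oo p
      rw [this, pdx_const]
    · exact pdx_coord (C.cd_b j k) h'
  · exact pdx_coord (C.cd_b j k) h
lemma L_sm {w : ℝ × (Fin d → ℝ) → ℝ} (hw : Sm w) : Sm (Lop o a w) :=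
  hw.pdt.add' (Sm.sum' fun j => Sm.sum' fun k => (Sm.coord (C.sm j k) o).mul' (hw.pdxx j k))
lemma L_pdx {w : ℝ × (Fin d → ℝ) → ℝ} (hw : Sm w) {i : Fin d} (hi : i ≠ o) :
    Lop o a (pdx i w) = pdx i (Lop o a w) := by
  unfold Lop
  rw [pdx_add hw.pdt (Sm.sum' fun j => Sm.sum' fun k =>
    (Sm.coord (C.sm j k) o).mul' (hw.pdxx j k)), pdx_pdt hw]
  funext p; congr 1
  rw [pdx_sum _ (fun j => Sm.sum' fun k => (Sm.coord (C.sm j k) o).mul' (hw.pdxx j k))]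
  refine Finset.sum_congr rfl fun j _ => ?_
  rw [pdx_sum _ (fun k => (Sm.coord (C.sm j k) o).mul' (hw.pdxx j k))]
  refine Finset.sum_congr rfl fun k _ => ?_
  rw [pdx_mul (Sm.coord (C.sm j k) o) (hw.pdxx j k), pdx_coord (C.sm j k) hi]
  simp only [pdxx]
  rw [pdx_pdx hw k i, pdx_pdx (hw.pdx k) j i]; ring
lemma L_pdt {w : ℝ × (Fin d → ℝ) → ℝ} (hw : Sm w) :
    Lop o a (pdt w) = pdt (Lop o a w) := by
  unfold Lop
  rw [pdt_add hw.pdt (Sm.sum' fun j => Sm.sum' fun k =>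
    (Sm.coord (C.sm j k) o).mul' (hw.pdxx j k))]
  funext p; congr 1
  rw [pdt_sum _ (fun j => Sm.sum' fun k => (Sm.coord (C.sm j k) o).mul' (hw.pdxx j k))]
  refine Finset.sum_congr rfl fun j _ => ?_
  rw [pdt_sum _ (fun k => (Sm.coord (C.sm j k) o).mul' (hw.pdxx j k))]
  refine Finset.sum_congr rfl fun k _ => ?_
  rw [pdt_mul (Sm.coord (C.sm j k) o) (hw.pdxx j k), pdt_coord (C.sm j k)]
  simp only [pdxx]
  rw [pdx_pdt hw k, pdx_pdt (hw.pdx k) j]; ring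
lemma cc_L {w : ℝ × (Fin d → ℝ) → ℝ} (p) :
    cc o a p * Lop o a w p = cc o a p * pdt w p + ∑ j, ∑ k, bb o a j k p * pdxx j k w p := by
  simp only [Lop, mul_add, Finset.mul_sum, bb, cc]
  congr 1
  refine Finset.sum_congr rfl fun j _ => Finset.sum_congr rfl fun k _ => by ring
end Coef

section ident
variable {d : ℕ} {o : Fin d} {δ : ℝ} {a : ℝ → Fin d → Fin d → ℝ}

lemma pdxx_sig {w : ℝ × (Fin d → ℝ) → ℝ} (hw : Sm w) (j k : Fin d) :
    pdxx j k w = pdx (sig o j k) (pdx (tau o j k) w) := by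
  unfold sig tau pdxx
  split_ifs with h
  · rfl
  · exact pdx_pdx hw j k

lemma ident (C : Coef o δ a) {R : ℝ} (hR : 0 < R) {ζ V : ℝ × (Fin d → ℝ) → ℝ} (hζ : Sm ζ)
    (hV : Sm V) (h0 : ∀ p ∈ pbQc d R, ζ p * V p = 0) :
    ∫ p in Qc d R, ζ p ^ 2 * ∑ j, ∑ k, bb o a j k p * (pdx j V p * pdx k V p) ≤
    ∫ p in Qc d R, (- (cc o a p * ζ p * pdt ζ p * V p ^ 2)
      - 2 * ζ p * V p * (∑ j, ∑ k, bb o a j k p * (pdx (sig o j k) ζ p * pdx (tau o j k) V p))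
      - ζ p ^ 2 * V p * (cc o a p * Lop o a V p)) := by
  have hc := C.cc_sm
  have hb := C.bb_sm
  have hL := C.L_sm hV
  set G : ℝ × (Fin d → ℝ) → ℝ := fun p => cc o a p * ((ζ p * V p) * (ζ p * V p)) with hG
  have hGs : Sm G := hc.mul' ((hζ.mul' hV).mul' (hζ.mul' hV))
  set F : Fin d → Fin d → ℝ × (Fin d → ℝ) → ℝ := fun j k p =>
    bb o a j k p * ((ζ p * V p) * (ζ p * pdx (tau o j k) V p)) with hF
  have hFs : ∀ j k, Sm (F j k) := fun j k =>
    (hb j k).mul' ((hζ.mul' hV).mul' (hζ.mul' (hV.pdx _)))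
  have hsum : Sm (fun p => ∑ j, ∑ k, pdx (sig o j k) (F j k) p) :=
    Sm.sum' fun j => Sm.sum' fun k => (hFs j k).pdx _
  have key : ∀ p, (- (cc o a p * ζ p * pdt ζ p * V p ^ 2)
      - 2 * ζ p * V p * (∑ j, ∑ k, bb o a j k p * (pdx (sig o j k) ζ p * pdx (tau o j k) V p))
      - ζ p ^ 2 * V p * (cc o a p * Lop o a V p)) -
      ζ p ^ 2 * ∑ j, ∑ k, bb o a j k p * (pdx j V p * pdx k V p) =
      - (∑ j, ∑ k, pdx (sig o j k) (F j k) p) - (1/2) * pdt G p := by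
    intro p
    have e1 : pdt G p = 2 * (cc o a p * ζ p * pdt ζ p * V p ^ 2)
        + 2 * (ζ p ^ 2 * V p * (cc o a p * pdt V p)) := by
      rw [hG, pdt_mul hc ((hζ.mul' hV).mul' (hζ.mul' hV)), pdt_mul (hζ.mul' hV) (hζ.mul' hV),
        pdt_mul hζ hV, C.pdt_cc]
      ring
    have e2 : ∀ j k, pdx (sig o j k) (F j k) p =
        2 * ζ p * V p * (bb o a j k p * (pdx (sig o j k) ζ p * pdx (tau o j k) V p))
        + ζ p ^ 2 * V p * (bb o a j k p * pdxx j k V p)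
        + ζ p ^ 2 * (bb o a j k p * (pdx j V p * pdx k V p)) := by
      intro j k
      have e3 : pdx (sig o j k) V p * pdx (tau o j k) V p = pdx j V p * pdx k V p := by
        unfold sig tau; split_ifs <;> ring
      rw [hF, pdx_mul (hb j k) ((hζ.mul' hV).mul' (hζ.mul' (hV.pdx _))),
        pdx_mul (hζ.mul' hV) (hζ.mul' (hV.pdx _)), pdx_mul hζ hV, pdx_mul hζ (hV.pdx _),
        C.pdx_bb, pdxx_sig (o := o) hV, ← e3]
      ring
    simp only [e1, e2, C.cc_L, Finset.sum_add_distrib, ← Finset.mul_sum]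
    ring
  have hi : ∫ p in Qc d R, (- (∑ j, ∑ k, pdx (sig o j k) (F j k) p) - (1/2) * pdt G p)
      = - (∫ p in Qc d R, (∑ j, ∑ k, pdx (sig o j k) (F j k) p))
        - (1/2) * ∫ p in Qc d R, pdt G p := by
    rw [int_sub hR.le (show Continuous (fun p => -∑ j, ∑ k, pdx (sig o j k) (F j k) p)
      from hsum.cont.neg) (hGs.pdt.cont.const_mul _), integral_neg, integral_const_mul]
  have hz : ∫ p in Qc d R, (∑ j, ∑ k, pdx (sig o j k) (F j k) p) = 0 := by
    rw [integral_finsetSum _ (fun j _ => intOn hR.le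
      (Sm.sum' fun k => (hFs j k).pdx _).cont)]
    refine Finset.sum_eq_zero fun j _ => ?_
    rw [integral_finsetSum _ (fun k _ => intOn hR.le ((hFs j k).pdx _).cont)]
    refine Finset.sum_eq_zero fun k _ => ?_
    apply ibp_x (hFs j k) _ hR
    intro p hp
    simp [hF, h0 p hp]
  have ht : ∫ p in Qc d R, pdt G p ≤ 0 := by
    apply ibp_t hGs hR
    · intro p hp; simp [hG, h0 p hp]
    · intro p
      exact mul_nonneg (C.pos.le.trans (C.cc_ge p)) (mul_self_nonneg _)
  have hs := hV.cont
  have hs' := hζ.cont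
  have hc' := hc.cont
  have hL' := hL.cont
  have hb' := fun j k => (hb j k).cont
  rw [← sub_nonneg, ← int_sub hR.le (by fun_prop) (by fun_prop)]
  simp_rw [key]
  rw [hi, hz]; linarith
end ident


section est
variable {d : ℕ} {o : Fin d} {δ : ℝ} {a : ℝ → Fin d → Fin d → ℝ}

lemma poincare {v : ℝ × (Fin d → ℝ) → ℝ} (hv : Sm v) (o : Fin d)
    (h0 : ∀ p ∈ pbQc d 1, v p = 0) :
    ∫ p in Qc d 1, v p ^ 2 ≤ 4 * ∫ p in Qc d 1, pdx o v p ^ 2 := by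
  have hx : Sm (fun p : ℝ × (Fin d → ℝ) => p.2 o) := Sm.coord (b := fun s => s) contDiff_id o
  have h1 : ∫ p in Qc d 1, pdx o (fun p => p.2 o * (v p * v p)) p = 0 := by
    apply ibp_x (hx.mul' (hv.mul' hv)) _ one_pos
    intro p hp; simp [h0 p hp]
  rw [pdx_mul hx (hv.mul' hv), pdx_mul hv hv, pdx_coord_self] at h1
  have hvc := hv.cont
  have h2 : ∫ p in Qc d 1, ((1/2) * v p ^ 2 - 2 * pdx o v p ^ 2) ≤ 0 := by
    rw [← h1]
    apply int_mono zero_le_one (by fun_prop) (by fun_prop)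
    intro p hp
    have h3 := ballE_sub zero_le_one hp.2
    rw [mem_closedBall_zero_iff] at h3
    have h4 : |p.2 o| ≤ 1 := (norm_le_pi_norm p.2 o).trans h3
    have h5 : (p.2 o)^2 ≤ 1 := by rw [← sq_abs]; nlinarith [abs_nonneg (p.2 o)]
    nlinarith [sq_nonneg (v p + 2 * (p.2 o * pdx o v p)), sq_nonneg (pdx o v p),
      mul_le_mul_of_nonneg_right h5 (sq_nonneg (pdx o v p))]
  rw [int_sub zero_le_one (by fun_prop) (by fun_prop), integral_const_mul,
    integral_const_mul] at h2
  linarith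

lemma energy (C : Coef o δ a) {v : ℝ × (Fin d → ℝ) → ℝ} (hv : Sm v)
    (h0 : ∀ p ∈ pbQc d 1, v p = 0) :
    ∫ p in Qc d 1, v p ^ 2 ≤ 16 * δ⁻¹ ^ 6 * ∫ p in Qc d 1, Lop o a v p ^ 2 := by
  have hδ := C.pos
  have hL := (C.L_sm hv).cont
  have hvc := hv.cont
  have hcc := C.cc_sm.cont
  have hb' := fun j k => (C.bb_sm j k).cont
  have h1 := ident C one_pos (ζ := fun _ => 1) (V := v) contDiff_const hv
    (by intro p hp; simp [h0 p hp])
  simp only [pdt_const, pdx_const] at h1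
  have h2 : ∫ p in Qc d 1, δ^2 * pdx o v p ^ 2 ≤
      ∫ p in Qc d 1, (δ^2/8 * v p ^ 2 + 2 * δ⁻¹^4 * Lop o a v p ^ 2) := by
    refine le_trans ?_ (h1.trans ?_)
    · apply int_mono zero_le_one (by fun_prop) (by fun_prop)
      intro p hp
      have h3 := C.bb_ell p (fun j => pdx j v p)
      have h4 : pdx o v p ^ 2 ≤ ∑ j, pdx j v p ^ 2 :=
        Finset.single_le_sum (f := fun j => pdx j v p ^ 2) (fun j _ => sq_nonneg _)
          (Finset.mem_univ o)
      have : δ^2 * pdx o v p ^ 2 ≤ δ^2 * ∑ j, pdx j v p ^ 2 := by gcongr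
      linarith
    · apply int_mono zero_le_one (by fun_prop) (by fun_prop)
      intro p hp
      have h3 := C.cc_le p
      have h4 := C.cc_ge p
      simp only [zero_mul, mul_zero, Finset.sum_const_zero]
      set f := Lop o a v p
      set c := cc o a p
      have h5 : (c * f)^2 ≤ δ⁻¹^2 * f^2 := by
        rw [mul_pow]; gcongr; linarith
      have h6 : 2 * δ⁻¹^2 * (c*f)^2 ≤ 2 * δ⁻¹^2 * (δ⁻¹^2 * f^2) := by gcongr
      have h7 : -(v p * (c * f)) ≤ δ^2/8 * v p ^2 + 2 * δ⁻¹^2 * (c*f)^2 := by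
        have e : δ * δ⁻¹ = 1 := mul_inv_cancel₀ hδ.ne'
        have : 0 ≤ 2 * (δ/4 * v p + δ⁻¹ * (c*f))^2 := by positivity
        have e2 : 2 * (δ/4 * v p + δ⁻¹ * (c*f))^2 = δ^2/8 * v p^2 + (δ * δ⁻¹) * (v p * (c * f))
          + 2 * δ⁻¹^2 * (c*f)^2 := by ring
        rw [e2, e] at this; linarith
      nlinarith
  rw [int_add zero_le_one (by fun_prop) (by fun_prop), integral_const_mul, integral_const_mul,
    integral_const_mul] at h2
  have h3 := poincare hv o h0
  set A := ∫ p in Qc d 1, pdx o v p ^ 2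
  set B := ∫ p in Qc d 1, v p ^ 2
  set D := ∫ p in Qc d 1, Lop o a v p ^ 2
  have h4 : δ^2 * B ≤ δ^2 * (4 * A) := by gcongr
  have h5 : δ^2 * B ≤ 16 * δ⁻¹^4 * D := by linarith
  have h6 : δ⁻¹^2 * (δ^2 * B) ≤ δ⁻¹^2 * (16 * δ⁻¹^4 * D) := by gcongr
  have e : δ⁻¹^2 * (δ^2 * B) = B := by
    rw [← mul_assoc, ← mul_pow, inv_mul_cancel₀ hδ.ne']; simp
  rw [e] at h6
  linarith

structure Cut (d : ℕ) (ρ R M : ℝ) (ζ : ℝ × (Fin d → ℝ) → ℝ) : Prop where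
  M1 : 1 ≤ M
  sm : Sm ζ
  one : ∀ p ∈ Qc d ρ, ζ p = 1
  zero : ∀ p ∈ pbQc d R, ζ p = 0
  b0 : ∀ p ∈ Qc d R, |ζ p| ≤ M
  bt : ∀ p ∈ Qc d R, |pdt ζ p| ≤ M
  bx : ∀ p ∈ Qc d R, ∀ j, |pdx j ζ p| ≤ M

lemma exists_cut (d : ℕ) {ρ R : ℝ} (h0 : 0 < ρ) (h : ρ < R) : ∃ ζ M, Cut d ρ R M ζ := by
  set D := R^2 - ρ^2 with hD
  have hDp : 0 < D := by nlinarith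
  set ζ : ℝ × (Fin d → ℝ) → ℝ := fun p =>
    Real.smoothTransition ((R^2 - p.1)/D) * Real.smoothTransition ((R^2 - ∑ j, (p.2 j)^2)/D)
    with hζ
  have hs : Sm ζ := by
    apply Sm.mul'
    · exact Real.smoothTransition.contDiff.comp (by fun_prop)
    · exact Real.smoothTransition.contDiff.comp (by fun_prop)
  have hc := hs.cont
  have hbig : Continuous (fun p => 1 + |ζ p| + |pdt ζ p| + ∑ j, |pdx j ζ p|) := by
    fun_prop
  obtain ⟨M, hM⟩ := (isCompact_Icc.prod (isCompact_closedBall (0 : Fin d → ℝ) R)).exists_bound_of_continuousOn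
    (s := Set.Icc 0 (R^2) ×ˢ Metric.closedBall (0 : Fin d → ℝ) R) hbig.continuousOn
  have hM' : ∀ p ∈ Qc d R, 1 + |ζ p| + |pdt ζ p| + ∑ j, |pdx j ζ p| ≤ M := fun p hp =>
    (le_abs_self _).trans (hM p (Qc_sub (by linarith) hp))
  have hsn : ∀ p, 0 ≤ ∑ j, |pdx j ζ p| := fun p => Finset.sum_nonneg fun _ _ => abs_nonneg _
  refine ⟨ζ, M, ?_, hs, ?_, ?_, ?_, ?_, ?_⟩
  · have hp : ((R^2/2, 0) : ℝ × (Fin d → ℝ)) ∈ Qc d R := by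
      refine ⟨⟨by simp only; nlinarith, by simp only; nlinarith⟩, ?_⟩
      simp [ballE]; nlinarith
    have := hM' _ hp
    have := hsn (R^2/2, 0)
    have := abs_nonneg (ζ (R^2/2, 0))
    have := abs_nonneg (pdt ζ (R^2/2, 0))
    linarith
  · rintro p ⟨hp1, hp2⟩
    have h2 : ∑ j, (p.2 j)^2 < ρ^2 := hp2
    have h1 := hp1.2
    simp only [hζ]
    rw [Real.smoothTransition.one_of_one_le, Real.smoothTransition.one_of_one_le, one_mul]
    · rw [le_div_iff₀ hDp]; linarith
    · rw [le_div_iff₀ hDp]; linarith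
  · rintro p (⟨_, hp⟩ | ⟨hp, _⟩)
    · have h2 : ∑ j, (p.2 j)^2 = R^2 := hp
      simp [hζ, h2]
    · have h2 : p.1 = R^2 := hp
      simp [hζ, h2]
  · intro p hp
    have := hM' p hp
    have := hsn p
    have := abs_nonneg (ζ p)
    have := abs_nonneg (pdt ζ p)
    linarith
  · intro p hp
    have := hM' p hp
    have := hsn p
    have := abs_nonneg (ζ p)
    have := abs_nonneg (pdt ζ p)
    linarith
  · intro p hp j
    have := hM' p hp
    have : |pdx j ζ p| ≤ ∑ j, |pdx j ζ p| :=
      Finset.single_le_sum (f := fun j => |pdx j ζ p|) (fun _ _ => abs_nonneg _) (Finset.mem_univ j)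
    have := abs_nonneg (ζ p)
    have := abs_nonneg (pdt ζ p)
    linarith
end est


section cacc
variable {d : ℕ} {o : Fin d} {δ : ℝ} {a : ℝ → Fin d → Fin d → ℝ}

lemma young {ε X Y : ℝ} (hε : 0 < ε) : 2 * (X * Y) ≤ ε * X^2 + ε⁻¹ * Y^2 := by
  have e : ε * ε⁻¹ = 1 := mul_inv_cancel₀ hε.ne'
  have h : 0 ≤ ε⁻¹ * (ε * X - Y)^2 := by positivity
  have e2 : ε⁻¹ * (ε * X - Y)^2 = (ε * ε⁻¹) * (ε * X^2) - (ε * ε⁻¹) * (2 * (X * Y)) + ε⁻¹ * Y^2 := by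
    ring
  rw [e2, e] at h; linarith

lemma ptw (C : Coef o δ a) {ρ R M : ℝ} {ζ V : ℝ × (Fin d → ℝ) → ℝ} (hζ : Cut d ρ R M ζ)
    {p} (hp : p ∈ Qc d R) :
    - (cc o a p * ζ p * pdt ζ p * V p ^ 2)
      - 2 * ζ p * V p * (∑ j, ∑ k, bb o a j k p * (pdx (sig o j k) ζ p * pdx (tau o j k) V p))
    ≤ δ^2/4 * (ζ p ^ 2 * ∑ j, pdx j V p ^ 2) +
      (δ⁻¹ * M^2 + d * (d * ((δ^2/(4*d^2))⁻¹ * (δ⁻¹^2 * M)^2))) * V p ^ 2 := by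
  have hδ := C.pos
  have hM := hζ.M1
  have hd : (0:ℝ) < d := by exact_mod_cast o.pos
  have h1 : - (cc o a p * ζ p * pdt ζ p * V p ^ 2) ≤ δ⁻¹ * M^2 * V p ^ 2 := by
    have h2 : |cc o a p * ζ p * pdt ζ p| ≤ δ⁻¹ * M * M := by
      rw [abs_mul, abs_mul, abs_of_nonneg (hδ.le.trans (C.cc_ge p))]
      have := C.cc_le p
      have := hζ.b0 p hp
      have := hζ.bt p hp
      gcongr
    have h3 := neg_abs_le (cc o a p * ζ p * pdt ζ p)
    nlinarith [sq_nonneg (V p)]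
  set ε := δ^2/(4*d^2) with hε
  have hε0 : 0 < ε := by positivity
  set S := ∑ j, pdx j V p ^ 2
  have h2 : ∀ j k, - (2 * ((ζ p * pdx (tau o j k) V p) * (bb o a j k p * pdx (sig o j k) ζ p * V p)))
      ≤ ε * (ζ p ^ 2 * S) + ε⁻¹ * (δ⁻¹^2 * M)^2 * V p ^ 2 := by
    intro j k
    have h3 := young (X := ζ p * pdx (tau o j k) V p)
      (Y := -(bb o a j k p * pdx (sig o j k) ζ p * V p)) hε0
    have h4 : pdx (tau o j k) V p ^ 2 ≤ S :=
      Finset.single_le_sum (f := fun j => pdx j V p ^ 2) (fun j _ => sq_nonneg _)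
          (Finset.mem_univ _)
    have h5 : ε * (ζ p * pdx (tau o j k) V p)^2 ≤ ε * (ζ p ^2 * S) := by
      rw [mul_pow]; gcongr
    have h6 : |bb o a j k p * pdx (sig o j k) ζ p| ≤ δ⁻¹^2 * M := by
      rw [abs_mul]
      have := C.bb_abs j k p
      have := hζ.bx p hp (sig o j k)
      gcongr
    have h7 : (-(bb o a j k p * pdx (sig o j k) ζ p * V p))^2 ≤ (δ⁻¹^2 * M)^2 * V p ^ 2 := by
      rw [neg_sq, mul_pow, ← sq_abs (bb o a j k p * _)]; gcongr
    have h8 : ε⁻¹ * (-(bb o a j k p * pdx (sig o j k) ζ p * V p))^2 ≤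
      ε⁻¹ * ((δ⁻¹^2 * M)^2 * V p ^ 2) := by gcongr
    linarith
  have h3 : - (2 * ζ p * V p *
      (∑ j, ∑ k, bb o a j k p * (pdx (sig o j k) ζ p * pdx (tau o j k) V p)))
      ≤ ∑ j : Fin d, ∑ k : Fin d, (ε * (ζ p ^ 2 * S) + ε⁻¹ * (δ⁻¹^2 * M)^2 * V p ^ 2) := by
    rw [Finset.mul_sum, ← Finset.sum_neg_distrib]
    refine Finset.sum_le_sum fun j _ => ?_
    rw [Finset.mul_sum, ← Finset.sum_neg_distrib]
    refine Finset.sum_le_sum fun k _ => ?_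
    have := h2 j k
    linarith
  simp only [Finset.sum_const, Finset.card_univ, Fintype.card_fin, nsmul_eq_mul] at h3
  have e : (d:ℝ) * (d * (ε * (ζ p ^ 2 * S))) = δ^2/4 * (ζ p ^ 2 * S) := by
    rw [hε]; field_simp
  nlinarith

/-- common part of the Caccioppoli inequalities -/
lemma cacc_core (C : Coef o δ a) {ρ R M : ℝ} (hρ : 0 < ρ) (hρR : ρ < R)
    {ζ V : ℝ × (Fin d → ℝ) → ℝ} (hζ : Cut d ρ R M ζ) (hV : Sm V)
    {g T : ℝ × (Fin d → ℝ) → ℝ} (hg : Continuous g) (hT : Continuous T) {N2 : ℝ} (hN2 : 0 ≤ N2)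
    (h1 : ∫ p in Qc d R, - (ζ p ^ 2 * V p * (cc o a p * Lop o a V p)) ≤ ∫ p in Qc d R, T p)
    (h2 : ∀ p ∈ Qc d R, T p ≤ δ^2/4 * (ζ p ^ 2 * ∑ j, pdx j V p ^ 2) + N2 * (V p ^ 2 + g p ^ 2)) :
    ∫ p in Qc d ρ, ∑ j, pdx j V p ^ 2 ≤
      2 * δ⁻¹^2 * ((δ⁻¹ * M^2 + d * (d * ((δ^2/(4*d^2))⁻¹ * (δ⁻¹^2 * M)^2))) + N2) *
        ∫ p in Qc d R, (V p ^ 2 + g p ^ 2) := by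
  have hδ := C.pos
  have hR : 0 < R := hρ.trans hρR
  have hL := (C.L_sm hV).cont
  have hvc := hV.cont
  have hzc := hζ.sm.cont
  have hzs := hζ.sm
  have hcc := C.cc_sm.cont
  have hb' := fun j k => (C.bb_sm j k).cont
  set N1 := δ⁻¹ * M^2 + d * (d * ((δ^2/(4*d^2))⁻¹ * (δ⁻¹^2 * M)^2)) with hN1
  have hN10 : 0 ≤ N1 := by positivity
  have h3 := ident C hR hζ.sm hV (by intro p hp; simp [hζ.zero p hp])
  set A := ∫ p in Qc d R, ζ p ^ 2 * ∑ j, pdx j V p ^ 2 with hA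
  set I := ∫ p in Qc d R, (V p ^ 2 + g p ^ 2) with hI
  have e1 : δ^2 * A ≤ ∫ p in Qc d R, ζ p ^ 2 * ∑ j, ∑ k, bb o a j k p * (pdx j V p * pdx k V p) := by
    rw [hA, ← integral_const_mul]
    apply int_mono hR.le (by fun_prop) (by fun_prop)
    intro p _
    have := C.bb_ell p (fun j => pdx j V p)
    have := mul_le_mul_of_nonneg_left this (sq_nonneg (ζ p))
    linarith
  have e2 : ∫ p in Qc d R, (- (cc o a p * ζ p * pdt ζ p * V p ^ 2)
      - 2 * ζ p * V p * (∑ j, ∑ k, bb o a j k p * (pdx (sig o j k) ζ p * pdx (tau o j k) V p))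
      - ζ p ^ 2 * V p * (cc o a p * Lop o a V p)) ≤
      ∫ p in Qc d R, (δ^2/2 * (ζ p ^ 2 * ∑ j, pdx j V p ^ 2) + (N1 + N2) * (V p ^ 2 + g p ^ 2)) := by
    rw [show (fun p => (- (cc o a p * ζ p * pdt ζ p * V p ^ 2)
      - 2 * ζ p * V p * (∑ j, ∑ k, bb o a j k p * (pdx (sig o j k) ζ p * pdx (tau o j k) V p))
      - ζ p ^ 2 * V p * (cc o a p * Lop o a V p))) = fun p => (- (cc o a p * ζ p * pdt ζ p * V p ^ 2)
      - 2 * ζ p * V p * (∑ j, ∑ k, bb o a j k p * (pdx (sig o j k) ζ p * pdx (tau o j k) V p)))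
      + - (ζ p ^ 2 * V p * (cc o a p * Lop o a V p)) from by funext p; ring]
    rw [int_add hR.le (by fun_prop) (by fun_prop)]
    refine (add_le_add_right h1 _).trans ?_
    rw [← int_add hR.le (by fun_prop) (by fun_prop)]
    apply int_mono hR.le (by fun_prop) (by fun_prop)
    intro p hp
    have k1 := ptw C hζ (V := V) hp
    have k2 := h2 p hp
    rw [← hN1] at k1
    nlinarith [mul_nonneg hN10 (sq_nonneg (g p))]
  rw [int_add hR.le (by fun_prop) (by fun_prop), integral_const_mul, integral_const_mul,
    ← hA, ← hI] at e2
  have e3 : ∫ p in Qc d ρ, ∑ j, pdx j V p ^ 2 ≤ A := by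
    refine le_trans ?_ (int_mono_set hρ.le hρR.le (f := fun p => ζ p ^ 2 * ∑ j, pdx j V p ^ 2)
      (by fun_prop)
      (fun p => mul_nonneg (sq_nonneg _) (Finset.sum_nonneg fun _ _ => sq_nonneg _)))
    apply int_mono hρ.le (by fun_prop) (by fun_prop)
    intro p hp
    simp [hζ.one p hp]
  refine e3.trans ?_
  have e4 : δ^2 * A ≤ 2 * ((N1 + N2) * I) := by linarith
  have h6 : δ⁻¹^2 * (δ^2 * A) ≤ δ⁻¹^2 * (2 * ((N1 + N2) * I)) := by gcongr
  have e : δ⁻¹^2 * (δ^2 * A) = A := by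
    rw [← mul_assoc, ← mul_pow, inv_mul_cancel₀ hδ.ne']; simp
  rw [e] at h6
  linarith

lemma cacc0 {o : Fin d} {δ : ℝ} {ρ R : ℝ} (hρ : 0 < ρ) (hρR : ρ < R) :
    ∃ N : ℝ, ∀ a, Coef o δ a → ∀ V : ℝ × (Fin d → ℝ) → ℝ, Sm V →
      ∫ p in Qc d ρ, ∑ j, pdx j V p ^ 2 ≤ N * ∫ p in Qc d R, (V p ^ 2 + Lop o a V p ^ 2) := by
  obtain ⟨ζ, M, hζ⟩ := exists_cut d hρ hρR
  refine ⟨_, fun a C V hV => cacc_core C hρ hρR hζ hV (C.L_sm hV).cont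
    (T := fun p => - (ζ p ^ 2 * V p * (cc o a p * Lop o a V p))) ?_
    (N2 := M^2 * |δ⁻¹|) (by positivity) le_rfl ?_⟩
  · have hL := (C.L_sm hV).cont
    have hvc := hV.cont
    have hzc := hζ.sm.cont
    have hcc := C.cc_sm.cont
    fun_prop
  · intro p hp
    have hδ := C.pos
    have hc0 := hδ.le.trans (C.cc_ge p)
    have h0 : 0 ≤ δ^2/4 * (ζ p ^ 2 * ∑ j, pdx j V p ^ 2) :=
      mul_nonneg (by positivity) (mul_nonneg (sq_nonneg _)
        (Finset.sum_nonneg fun _ _ => sq_nonneg _))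
    rw [abs_of_pos (by positivity)]
    have h1 : ζ p ^ 2 * cc o a p ≤ M^2 * δ⁻¹ := by
      rw [← sq_abs]
      have := hζ.b0 p hp
      have := C.cc_le p
      gcongr
    have h2 : 0 ≤ ζ p ^ 2 * cc o a p := by positivity
    have h3 : -(V p * Lop o a V p) ≤ V p ^ 2 + Lop o a V p ^ 2 := by
      nlinarith [sq_nonneg (V p + Lop o a V p), sq_nonneg (V p), sq_nonneg (Lop o a V p)]
    have h4 := mul_le_mul_of_nonneg_left h3 h2
    have h5 := mul_le_mul_of_nonneg_right h1
      (add_nonneg (sq_nonneg (V p)) (sq_nonneg (Lop o a V p)))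
    nlinarith

lemma cacc1 {o : Fin d} {δ : ℝ} {ρ R : ℝ} (hρ : 0 < ρ) (hρR : ρ < R) :
    ∃ N : ℝ, ∀ a, Coef o δ a → ∀ w : ℝ × (Fin d → ℝ) → ℝ, Sm w → ∀ k, k ≠ o →
      ∫ p in Qc d ρ, ∑ j, pdx j (pdx k w) p ^ 2 ≤
        N * ∫ p in Qc d R, (pdx k w p ^ 2 + Lop o a w p ^ 2) := by
  obtain ⟨ζ, M, hζ⟩ := exists_cut d hρ hρR
  have hR : 0 < R := hρ.trans hρR
  refine ⟨_, fun a C w hw k hk => cacc_core C hρ hρR hζ (hw.pdx k) (C.L_sm hw).cont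
    (T := fun p => cc o a p * Lop o a w p * (2 * ζ p * pdx k ζ p * pdx k w p +
      ζ p ^ 2 * pdx k (pdx k w) p)) ?_
    (N2 := M^4 * |δ⁻¹| + 4 * |δ⁻¹|^4 * M^2) (by positivity) ?_ ?_⟩
  · have hL := (C.L_sm hw).cont
    have hvc := hw.cont
    have hzc := hζ.sm.cont
    have hzs := hζ.sm
    have hcc := C.cc_sm.cont
    fun_prop
  · have hLs := (C.L_sm hw)
    have hL := hLs.cont
    have hvc := hw.cont
    have hzc := hζ.sm.cont
    have hzs := hζ.sm
    have hcs := C.cc_sm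
    have hcc := C.cc_sm.cont
    rw [C.L_pdx hw hk]
    have hF := hcs.mul' (hLs.mul' ((hzs.mul' hzs).mul' (hw.pdx k)))
    have h1 := ibp_x hF k hR (by intro p hp; simp [hζ.zero p hp])
    rw [← sub_nonneg, ← int_sub hR.le (by fun_prop) (by fun_prop)]
    rw [pdx_mul hcs (hLs.mul' ((hzs.mul' hzs).mul' (hw.pdx k))),
      pdx_mul hLs ((hzs.mul' hzs).mul' (hw.pdx k)), pdx_mul (hzs.mul' hzs) (hw.pdx k),
      pdx_mul hzs hzs, C.pdx_cc hk] at h1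
    refine le_of_eq ?_
    rw [← h1]
    congr 1
    funext p; ring
  · intro p hp
    have hδ := C.pos
    have hM := hζ.M1
    have hc0 := hδ.le.trans (C.cc_ge p)
    have h0 : pdx k (pdx k w) p ^ 2 ≤ ∑ j, pdx j (pdx k w) p ^ 2 :=
      Finset.single_le_sum (f := fun j => pdx j (pdx k w) p ^ 2) (fun j _ => sq_nonneg _)
          (Finset.mem_univ _)
    rw [abs_of_pos (by positivity)]
    set f := Lop o a w p
    set V := pdx k w p
    set Vk := pdx k (pdx k w) p
    set c := cc o a p
    have hc := C.cc_le p
    have hb0 := hζ.b0 p hp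
    have hbx := hζ.bx p hp k
    have t1 : 2 * (c * f * (ζ p * pdx k ζ p * V)) ≤ M^4 * δ⁻¹ * (V^2 + f^2) := by
      have q1 : |c * ζ p * pdx k ζ p| ≤ δ⁻¹ * M * M := by
        rw [abs_mul, abs_mul, abs_of_nonneg hc0]; gcongr
      have q2 : 2 * (f * V) * (c * ζ p * pdx k ζ p) ≤ (V^2+f^2) * |c * ζ p * pdx k ζ p| := by
        have r1 : |2 * (f * V)| ≤ V^2 + f^2 := by
          rw [abs_le]; constructor <;> nlinarith [sq_nonneg (f+V), sq_nonneg (f-V)]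
        calc _ ≤ |2 * (f * V) * (c * ζ p * pdx k ζ p)| := le_abs_self _
          _ = |2 * (f * V)| * |c * ζ p * pdx k ζ p| := abs_mul _ _
          _ ≤ _ := by gcongr
      have q3 : δ⁻¹ * M * M ≤ M^4 * δ⁻¹ := by
        have : M^2 ≤ M^4 := pow_le_pow_right₀ hM (by norm_num)
        have : δ⁻¹ * M^2 ≤ δ⁻¹ * M^4 := by gcongr
        nlinarith
      have q4 : (V^2+f^2) * |c * ζ p * pdx k ζ p| ≤ (V^2+f^2) * (M^4 * δ⁻¹) := by
        gcongr; exact q1.trans q3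
      linarith
    have t2 : c * f * (ζ p ^ 2 * Vk) ≤ δ^2/4 * (ζ p ^ 2 * Vk^2) + 4 * δ⁻¹^4 * M^2 * f^2 := by
      have y := young (X := ζ p * Vk) (Y := c * (f * ζ p)) (ε := δ^2/2) (by positivity)
      have e : (δ^2/2)⁻¹ = 2 * δ⁻¹^2 := by field_simp
      rw [e] at y
      have z1 : (c * (f * ζ p))^2 ≤ δ⁻¹^2 * (f^2 * M^2) := by
        rw [mul_pow, mul_pow, ← sq_abs (ζ p)]; gcongr
      have z2 : 2 * δ⁻¹^2 * (c * (f * ζ p))^2 ≤ 2 * δ⁻¹^2 * (δ⁻¹^2 * (f^2 * M^2)) := by gcongr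
      have z3 : 0 ≤ δ⁻¹^4 * M^2 * f^2 := by positivity
      nlinarith
    have t3 : δ^2/4 * (ζ p ^ 2 * Vk^2) ≤ δ^2/4 * (ζ p ^ 2 * ∑ j, pdx j (pdx k w) p ^ 2) := by
      gcongr
    have t4 : 0 ≤ 4 * δ⁻¹^4 * M^2 * V^2 := by positivity
    linarith
end cacc


section e11
variable {d : ℕ}

noncomputable def Smix (o : Fin d) (w : ℝ × (Fin d → ℝ) → ℝ) : ℝ × (Fin d → ℝ) → ℝ :=
  fun p => ∑ j, ∑ k, (if j = o ∧ k = o then 0 else pdxx j k w p) ^ 2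

lemma Smix_nonneg (o : Fin d) (w : ℝ × (Fin d → ℝ) → ℝ) (p) : 0 ≤ Smix o w p :=
  Finset.sum_nonneg fun _ _ => Finset.sum_nonneg fun _ _ => sq_nonneg _

lemma Smix_cont (o : Fin d) {w : ℝ × (Fin d → ℝ) → ℝ} (hw : Sm w) : Continuous (Smix o w) := by
  unfold Smix
  refine continuous_finsetSum _ fun j _ => continuous_finsetSum _ fun k _ => ?_
  split_ifs
  · fun_prop
  · fun_prop

lemma Xbound {o : Fin d} {δ : ℝ} {a} (C : Coef o δ a) (w : ℝ × (Fin d → ℝ) → ℝ) (p) :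
    (cc o a p * pdt w p + pdxx o o w p)^2 ≤
      2 * δ⁻¹^2 * Lop o a w p ^ 2 + 2 * d^2 * δ⁻¹^4 * Smix o w p := by
  have hδ := C.pos
  set β : Fin d → Fin d → ℝ := fun j k => bb o a j k p * (if j = o ∧ k = o then 0 else pdxx j k w p)
    with hβ
  have h1 : cc o a p * pdt w p + pdxx o o w p = cc o a p * Lop o a w p - ∑ j, ∑ k, β j k := by
    rw [C.cc_L]
    have : ∑ j, ∑ k, bb o a j k p * pdxx j k w p - ∑ j, ∑ k, β j k = pdxx o o w p := by
      simp only [← Finset.sum_sub_distrib, hβ]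
      rw [Finset.sum_eq_single o, Finset.sum_eq_single o]
      · simp [C.bb_oo]
      · intro k _ hk; simp [hk]
      · simp
      · intro j _ hj; simp [hj]
      · simp
    linarith
  have h2 : (∑ j, ∑ k, β j k)^2 ≤ d^2 * ∑ j, ∑ k, β j k ^ 2 := by
    have e1 := sq_sum_le_card_mul_sum_sq (s := Finset.univ) (f := fun j => ∑ k, β j k)
    have e2 : ∀ j, (∑ k, β j k)^2 ≤ d * ∑ k, β j k ^2 := fun j => by
      simpa using sq_sum_le_card_mul_sum_sq (s := Finset.univ) (f := fun k => β j k)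
    simp only [Finset.card_univ, Fintype.card_fin] at e1
    refine e1.trans ?_
    rw [sq, mul_assoc]
    refine mul_le_mul_of_nonneg_left ?_ (by positivity)
    rw [Finset.mul_sum]
    exact Finset.sum_le_sum fun j _ => e2 j
  have h3 : ∑ j, ∑ k, β j k ^ 2 ≤ δ⁻¹^4 * Smix o w p := by
    unfold Smix
    simp only [Finset.mul_sum]
    refine Finset.sum_le_sum fun j _ => Finset.sum_le_sum fun k _ => ?_
    rw [hβ, mul_pow, ← sq_abs (bb o a j k p)]
    have := C.bb_abs j k p
    calc _ ≤ (δ⁻¹^2)^2 * (if j = o ∧ k = o then 0 else pdxx j k w p) ^ 2 := by gcongr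
      _ = _ := by ring
  have h4 : (cc o a p * Lop o a w p)^2 ≤ δ⁻¹^2 * Lop o a w p ^ 2 := by
    rw [mul_pow]
    have := C.cc_le p
    have := hδ.le.trans (C.cc_ge p)
    gcongr
  rw [h1]
  have h5 : (d:ℝ)^2 * ∑ j, ∑ k, β j k ^ 2 ≤ d^2 * (δ⁻¹^4 * Smix o w p) := by gcongr
  nlinarith [sq_nonneg (cc o a p * Lop o a w p + ∑ j, ∑ k, β j k)]

lemma e11_alg {δ c A f wt wo woo S z zx zt M D K : ℝ} (hδ : 0 < δ) (hc0 : 0 < c) (hcge : δ ≤ c)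
    (hA0 : 0 < A) (ha1 : δ ≤ A) (ha2 : A ≤ δ⁻¹) (hcA : c * A = 1) (hM : 0 ≤ M)
    (hb0 : |z| ≤ M) (hbt : |zt| ≤ M) (hbx : |zx| ≤ M) (hSm : 0 ≤ S)
    (hX : (c * wt + woo)^2 ≤ 2 * δ⁻¹^2 * f^2 + 2 * D^2 * δ⁻¹^4 * S)
    (hK : K = M^2 * δ⁻¹ * (2 * δ⁻¹^2 + 2 * D^2 * δ⁻¹^4) + (8 * δ⁻¹ + 2) * M^2) :
    δ/2 * (z^2 * (wt^2 + woo^2)) ≤ K * (f^2 + wo^2 + S)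
      - 4 * (z * zx * (wt * wo)) - 2 * (z^2 * (wt * woo)) + 2 * (z * zt * wo^2) := by
  have z2 : z^2 ≤ M^2 := by rw [← sq_abs]; gcongr
  have s1 : z^2 * A * (c * wt + woo)^2 ≤ M^2 * δ⁻¹ * (2 * δ⁻¹^2 * f^2 + 2 * D^2 * δ⁻¹^4 * S) := by
    gcongr
  have s1' : z^2 * A * (c * wt + woo)^2 = z^2 * (c * wt^2 + 2 * (wt * woo) + A * woo^2) := by
    have : A * (c * wt + woo)^2 = (c*A) * c * wt^2 + 2 * (c * A) * (wt * woo) + A * woo^2 := by ring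
    rw [mul_assoc, this, hcA]; ring
  have s2 : δ * (z^2 * (wt^2 + woo^2)) ≤ z^2 * (c * wt^2 + A * woo^2) := by
    have q1 : δ * wt^2 ≤ c * wt^2 := by gcongr
    have q2 : δ * woo^2 ≤ A * woo^2 := by gcongr
    have := mul_le_mul_of_nonneg_left (add_le_add q1 q2) (sq_nonneg z)
    linarith
  have s3 : 4 * (z * zx * (wt * wo)) ≤ δ/2 * (z^2 * wt^2) + 8 * δ⁻¹ * M^2 * wo^2 := by
    have y := young (X := z * wt) (Y := 2 * (zx * wo)) (ε := δ/2) (by positivity)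
    have e : (δ/2)⁻¹ = 2 * δ⁻¹ := by field_simp
    rw [e] at y
    have q : (zx)^2 ≤ M^2 := by rw [← sq_abs]; gcongr
    have q2 : 8 * δ⁻¹ * (zx)^2 * wo^2 ≤ 8 * δ⁻¹ * M^2 * wo^2 := by gcongr
    nlinarith
  have s4 : -(2 * (z * zt * wo^2)) ≤ 2 * M^2 * wo^2 := by
    have q : |z * zt| ≤ M * M := by rw [abs_mul]; gcongr
    have := neg_abs_le (z * zt)
    nlinarith [sq_nonneg wo]
  have s5 : 0 ≤ δ/2 * (z^2 * woo^2) := by positivity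
  have hKeq : M^2 * δ⁻¹ * (2 * δ⁻¹^2 * f^2 + 2 * D^2 * δ⁻¹^4 * S) + 8 * δ⁻¹ * M^2 * wo^2
      + 2 * M^2 * wo^2 ≤ K * (f^2 + wo^2 + S) := by
    have u1 : 0 ≤ M^2 * δ⁻¹ * (2 * δ⁻¹^2) * (wo^2 + S) := by positivity
    have u2 : 0 ≤ M^2 * δ⁻¹ * (2 * D^2 * δ⁻¹^4) * (wo^2 + f^2) := by positivity
    have u3 : 0 ≤ (8 * δ⁻¹ + 2) * M^2 * (f^2 + S) := by positivity
    rw [hK]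
    linarith
  linarith

lemma e11 {o : Fin d} {δ : ℝ} {ρ R : ℝ} (hρ : 0 < ρ) (hρR : ρ < R) :
    ∃ N : ℝ, ∀ a, Coef o δ a → ∀ w : ℝ × (Fin d → ℝ) → ℝ, Sm w →
      ∫ p in Qc d ρ, (pdt w p ^ 2 + pdxx o o w p ^ 2) ≤
        N * ∫ p in Qc d R, (Lop o a w p ^ 2 + pdx o w p ^ 2 + Smix o w p) := by
  obtain ⟨ζ, M, hζ⟩ := exists_cut d hρ hρR
  have hR : 0 < R := hρ.trans hρR
  set K := M^2 * δ⁻¹ * (2 * δ⁻¹^2 + 2 * d^2 * δ⁻¹^4) + (8 * δ⁻¹ + 2) * M^2 with hK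
  refine ⟨2 * δ⁻¹ * K, fun a C w hw => ?_⟩
  have hδ := C.pos
  have hM := hζ.M1
  have hLs := (C.L_sm hw)
  have hL := hLs.cont
  have hvc := hw.cont
  have hzs := hζ.sm
  have hzc := hζ.sm.cont
  have hcs := C.cc_sm
  have hcc := C.cc_sm.cont
  have hsc := Smix_cont o hw
  set F1 : ℝ × (Fin d → ℝ) → ℝ := fun p => (ζ p * ζ p) * (pdt w p * pdx o w p) with hF1
  set F2 : ℝ × (Fin d → ℝ) → ℝ := fun p => (ζ p * pdx o w p) * (ζ p * pdx o w p) with hF2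
  have hF1s : Sm F1 := (hzs.mul' hzs).mul' (hw.pdt.mul' (hw.pdx o))
  have hF2s : Sm F2 := (hzs.mul' (hw.pdx o)).mul' (hzs.mul' (hw.pdx o))
  have i1 : ∫ p in Qc d R, pdx o F1 p = 0 :=
    ibp_x hF1s o hR (by intro p hp; simp [hF1, hζ.zero p hp])
  have i2 : ∫ p in Qc d R, pdt F2 p ≤ 0 :=
    ibp_t hF2s hR (by intro p hp; simp [hF2, hζ.zero p hp]) (fun p => mul_self_nonneg _)
  have e1 : ∀ p, pdx o F1 p = 2 * (ζ p * pdx o ζ p * (pdt w p * pdx o w p))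
      + ζ p^2 * (pdt (pdx o w) p * pdx o w p) + ζ p ^2 * (pdt w p * pdxx o o w p) := by
    intro p
    rw [hF1, pdx_mul (hzs.mul' hzs) (hw.pdt.mul' (hw.pdx o)), pdx_mul hzs hzs,
      pdx_mul hw.pdt (hw.pdx o), pdx_pdt hw]
    simp only [pdxx]; ring
  have e2 : ∀ p, pdt F2 p = 2 * (ζ p * pdt ζ p * pdx o w p ^2)
      + 2 * (ζ p^2 * (pdt (pdx o w) p * pdx o w p)) := by
    intro p
    rw [hF2, pdt_mul (hzs.mul' (hw.pdx o)) (hzs.mul' (hw.pdx o)), pdt_mul hzs (hw.pdx o)]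
    ring
  have key : ∫ p in Qc d R, δ/2 * (ζ p^2 * (pdt w p ^ 2 + pdxx o o w p ^ 2)) ≤
      ∫ p in Qc d R, (K * (Lop o a w p ^ 2 + pdx o w p ^ 2 + Smix o w p) - 2 * pdx o F1 p
        + pdt F2 p) := by
    apply int_mono hR.le (by fun_prop) (by fun_prop)
    intro p hp
    rw [e1, e2]
    have hX := Xbound C w p
    have hc0 := hδ.trans_le (C.cc_ge p)
    have hcge := C.cc_ge p
    have hb0 := hζ.b0 p hp
    have hbt := hζ.bt p hp
    have hbx := hζ.bx p hp o
    have hSm := Smix_nonneg o w p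
    have ha1 : δ ≤ (cc o a p)⁻¹ := by
      rw [cc, inv_inv]; exact (C.diag _ o).1
    have ha2 : (cc o a p)⁻¹ ≤ δ⁻¹ := inv_anti₀ hδ hcge
    have hA := e11_alg (wt := pdt w p) (wo := pdx o w p) (K := K) hδ hc0 hcge (inv_pos.2 hc0) ha1 ha2 (mul_inv_cancel₀ hc0.ne')
      (by linarith) hb0 hbt hbx hSm hX hK
    linarith
  rw [int_add hR.le (by fun_prop) (by fun_prop), int_sub hR.le (by fun_prop) (by fun_prop),
    integral_const_mul, integral_const_mul, integral_const_mul, i1] at key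
  have e3 : ∫ p in Qc d ρ, (pdt w p ^ 2 + pdxx o o w p ^ 2) ≤
      ∫ p in Qc d R, ζ p^2 * (pdt w p ^ 2 + pdxx o o w p ^ 2) := by
    refine le_trans ?_ (int_mono_set hρ.le hρR.le
      (f := fun p => ζ p ^ 2 * (pdt w p ^ 2 + pdxx o o w p ^ 2))
      (by fun_prop) (fun p => by positivity))
    apply int_mono hρ.le (by fun_prop) (by fun_prop)
    intro p hp
    simp [hζ.one p hp]
  refine e3.trans ?_
  set I := ∫ p in Qc d R, (Lop o a w p ^ 2 + pdx o w p ^ 2 + Smix o w p)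
  set J := ∫ p in Qc d R, ζ p^2 * (pdt w p ^ 2 + pdxx o o w p ^ 2)
  have k1 : δ/2 * J ≤ K * I := by linarith
  have k2 : 2 * δ⁻¹ * (δ/2 * J) ≤ 2 * δ⁻¹ * (K * I) := by gcongr
  have k3 : 2 * δ⁻¹ * (δ/2 * J) = J := by field_simp
  linarith

/-- main interior estimate -/
lemma Eest {o : Fin d} {δ : ℝ} {ρ R : ℝ} (hρ : 0 < ρ) (hρR : ρ < R) :
    ∃ N : ℝ, 0 ≤ N ∧ ∀ a, Coef o δ a → ∀ w : ℝ × (Fin d → ℝ) → ℝ, Sm w →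
      (∀ j, ∫ p in Qc d ρ, pdx j w p ^ 2 ≤ N * ∫ p in Qc d R, (w p ^ 2 + Lop o a w p ^ 2)) ∧
      (∀ j k, ∫ p in Qc d ρ, pdxx j k w p ^ 2 ≤
        N * ∫ p in Qc d R, (w p ^ 2 + Lop o a w p ^ 2)) ∧
      ∫ p in Qc d ρ, pdt w p ^ 2 ≤ N * ∫ p in Qc d R, (w p ^ 2 + Lop o a w p ^ 2) := by
  set ρ1 := (2*ρ + R)/3 with hρ1
  set ρ2 := (ρ + 2*R)/3 with hρ2
  have h1 : ρ < ρ1 := by rw [hρ1]; linarith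
  have h12 : ρ1 < ρ2 := by rw [hρ1, hρ2]; linarith
  have h2 : ρ2 < R := by rw [hρ2]; linarith
  have p1 : 0 < ρ1 := hρ.trans h1
  have p2 : 0 < ρ2 := p1.trans h12
  have hR : 0 < R := p2.trans h2
  obtain ⟨N0, H0⟩ := cacc0 (d := d) (o := o) (δ := δ) p2 h2
  obtain ⟨N1, H1⟩ := cacc1 (d := d) (o := o) (δ := δ) p1 h12
  obtain ⟨N2, H2⟩ := e11 (d := d) (o := o) (δ := δ) hρ h1
  set A := |N0|
  set B := |N1| * (A + 1)
  set D := |N2| * (1 + A + d * (d * B))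
  have hA : 0 ≤ A := abs_nonneg _
  have hB : 0 ≤ B := by positivity
  have hD : 0 ≤ D := by positivity
  refine ⟨A + B + D, by positivity, fun a C w hw => ?_⟩
  have hLs := (C.L_sm hw)
  have hL := hLs.cont
  have hwc := hw.cont
  have hsc := Smix_cont o hw
  set I := ∫ p in Qc d R, (w p ^ 2 + Lop o a w p ^ 2) with hI
  have hI0 : 0 ≤ I := int_nonneg fun p => by positivity
  have f2 : ∀ r, 0 ≤ r → r ≤ R → ∫ p in Qc d r, Lop o a w p ^ 2 ≤ I := by
    intro r hr hrR
    refine (int_mono_set hr hrR (by fun_prop) (fun p => sq_nonneg _)).trans ?_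
    exact int_mono hR.le (by fun_prop) (by fun_prop) (fun p _ => by nlinarith [sq_nonneg (w p)])
  have g1 : ∀ j, ∫ p in Qc d ρ2, pdx j w p ^ 2 ≤ A * I := by
    intro j
    have := H0 a C w hw
    have h3 : N0 * I ≤ A * I := by gcongr; exact le_abs_self _
    refine le_trans ?_ (this.trans h3)
    apply int_mono p2.le (by fun_prop) (by fun_prop)
    intro p _
    exact Finset.single_le_sum (f := fun j => pdx j w p ^ 2) (fun j _ => sq_nonneg _)
          (Finset.mem_univ _)
  have g2 : ∀ k, k ≠ o → ∀ j, ∫ p in Qc d ρ1, pdx j (pdx k w) p ^ 2 ≤ B * I := by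
    intro k hk j
    have h3 := H1 a C w hw k hk
    rw [int_add p2.le (by fun_prop) (by fun_prop)] at h3
    have h4 := g1 k
    have h5 := f2 ρ2 p2.le h2.le
    have i1 : 0 ≤ ∫ p in Qc d ρ2, pdx k w p ^ 2 := int_nonneg fun p => by positivity
    have i2 : 0 ≤ ∫ p in Qc d ρ2, Lop o a w p ^ 2 := int_nonneg fun p => by positivity
    have h6 : N1 * ((∫ p in Qc d ρ2, pdx k w p ^ 2) + ∫ p in Qc d ρ2, Lop o a w p ^ 2)
      ≤ |N1| * (A * I + I) := by
      refine (mul_le_mul_of_nonneg_right (le_abs_self N1) (by positivity)).trans ?_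
      gcongr
    have h7 : ∫ p in Qc d ρ1, pdx j (pdx k w) p ^ 2 ≤
        ∫ p in Qc d ρ1, ∑ j, pdx j (pdx k w) p ^ 2 := by
      apply int_mono p1.le (by fun_prop) (by fun_prop)
      intro p _
      exact Finset.single_le_sum (f := fun j => pdx j (pdx k w) p ^ 2) (fun j _ => sq_nonneg _)
          (Finset.mem_univ _)
    have : |N1| * (A * I + I) = B * I := by ring
    linarith
  have g3 : ∀ j k, ¬ (j = o ∧ k = o) → ∫ p in Qc d ρ1, pdxx j k w p ^ 2 ≤ B * I := by
    intro j k hjk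
    by_cases hk : k = o
    · have hj : j ≠ o := fun h => hjk ⟨h, hk⟩
      have : pdxx j k w = pdx k (pdx j w) := pdx_pdx hw j k
      rw [this]; exact g2 j hj k
    · exact g2 k hk j
  have g4 : ∫ p in Qc d ρ1, Smix o w p ≤ d * (d * B) * I := by
    unfold Smix
    have ci : ∀ j k, Continuous fun p => (if j = o ∧ k = o then 0 else pdxx j k w p) ^ 2 := by
      intro j k; split_ifs <;> fun_prop
    rw [integral_finsetSum _ (fun j _ => intOn p1.le (continuous_finsetSum _ fun k _ => ci j k))]
    have : ∀ j, ∫ p in Qc d ρ1, ∑ k, (if j = o ∧ k = o then 0 else pdxx j k w p) ^ 2 ≤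
        ∑ k : Fin d, B * I := by
      intro j
      rw [integral_finsetSum _ (fun k _ => intOn p1.le (ci j k))]
      refine Finset.sum_le_sum fun k _ => ?_
      by_cases h : j = o ∧ k = o
      · simp [h]; positivity
      · simp only [h, if_false]; exact g3 j k h
    refine (Finset.sum_le_sum fun j _ => this j).trans ?_
    simp only [Finset.sum_const, Finset.card_univ, Fintype.card_fin, nsmul_eq_mul]
    linarith
  have g5 : ∫ p in Qc d ρ, (pdt w p ^ 2 + pdxx o o w p ^ 2) ≤ D * I := by
    have h3 := H2 a C w hw
    rw [int_add p1.le (by fun_prop) (by fun_prop), int_add p1.le (by fun_prop) (by fun_prop)] at h3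
    have h4 : ∫ p in Qc d ρ1, pdx o w p ^ 2 ≤ A * I :=
      (int_mono_set p1.le h12.le (by fun_prop) (fun p => sq_nonneg _)).trans (g1 o)
    have h5 := f2 ρ1 p1.le (by linarith)
    have i1 : 0 ≤ ∫ p in Qc d ρ1, pdx o w p ^ 2 := int_nonneg fun p => by positivity
    have i2 : 0 ≤ ∫ p in Qc d ρ1, Lop o a w p ^ 2 := int_nonneg fun p => by positivity
    have i3 : 0 ≤ ∫ p in Qc d ρ1, Smix o w p := int_nonneg (Smix_nonneg o w)
    have h6 : N2 * ((∫ p in Qc d ρ1, Lop o a w p ^ 2) + (∫ p in Qc d ρ1, pdx o w p ^ 2)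
        + ∫ p in Qc d ρ1, Smix o w p)
      ≤ |N2| * (I + A * I + d * (d * B) * I) := by
      refine (mul_le_mul_of_nonneg_right (le_abs_self N2) (by positivity)).trans ?_
      gcongr
    have : |N2| * (I + A * I + d * (d * B) * I) = D * I := by ring
    linarith
  have mono : ∀ (r : ℝ) (g : ℝ × (Fin d → ℝ) → ℝ), Continuous g → ρ ≤ r →
      ∫ p in Qc d ρ, g p ^ 2 ≤ ∫ p in Qc d r, g p ^ 2 := fun r g hg hr =>
    int_mono_set hρ.le hr (by fun_prop) (fun p => sq_nonneg _)
  have q1 : 0 ≤ A * I := by positivity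
  have q2 : 0 ≤ B * I := by positivity
  have q3 : 0 ≤ D * I := by positivity
  have q : (A + B + D) * I = A * I + B * I + D * I := by ring
  rw [q]
  refine ⟨fun j => ?_, fun j k => ?_, ?_⟩
  · have := mono ρ2 (pdx j w) (by fun_prop) (by linarith)
    have := g1 j
    linarith
  · by_cases h : j = o ∧ k = o
    · obtain ⟨hj, hk⟩ := h
      rw [hj, hk]
      have : ∫ p in Qc d ρ, pdxx o o w p ^ 2 ≤ ∫ p in Qc d ρ, (pdt w p ^ 2 + pdxx o o w p ^ 2) :=
        int_mono hρ.le (by fun_prop) (by fun_prop) (fun p _ => by nlinarith [sq_nonneg (pdt w p)])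
      linarith
    · have := mono ρ1 (pdxx j k w) (by fun_prop) (by linarith)
      have := g3 j k h
      linarith
  · have : ∫ p in Qc d ρ, pdt w p ^ 2 ≤ ∫ p in Qc d ρ, (pdt w p ^ 2 + pdxx o o w p ^ 2) :=
        int_mono hρ.le (by fun_prop) (by fun_prop) (fun p _ => by nlinarith [sq_nonneg (pdxx o o w p)])
    linarith
end e11


section sob
variable {d : ℕ}

lemma sob1 {f f' : ℝ → ℝ} (hf : ∀ s, HasDerivAt f (f' s) s) (hc' : Continuous f') (x : ℝ) {ε : ℝ}
    (hε : 0 < ε) :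
    f x ^ 2 ≤ (ε⁻¹ + 1) * ∫ s in x..x+ε, (f s ^ 2 + f' s ^ 2) := by
  have hc : Continuous f := continuous_iff_continuousAt.2 fun s => (hf s).continuousAt
  set I := ∫ s in x..x+ε, (f s ^ 2 + f' s ^ 2) with hI
  have hle : x ≤ x + ε := by linarith
  have h1 : ∀ y ∈ Set.Icc x (x+ε), f x ^ 2 ≤ f y ^ 2 + I := by
    intro y hy
    have hd : ∀ s, HasDerivAt (fun s => f s ^ 2) (2 * f s * f' s) s := by
      intro s
      exact ((hf s).fun_pow 2).congr_deriv (by norm_num)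
    have e : ∫ s in x..y, 2 * f s * f' s = f y ^ 2 - f x ^ 2 :=
      intervalIntegral.integral_eq_sub_of_hasDerivAt (fun s _ => hd s)
        (Continuous.intervalIntegrable (by fun_prop) _ _)
    have e2 : -(∫ s in x..y, 2 * f s * f' s) ≤ ∫ s in x..y, (f s ^ 2 + f' s ^ 2) := by
      rw [← intervalIntegral.integral_neg]
      apply intervalIntegral.integral_mono_on hy.1
        (Continuous.intervalIntegrable (by fun_prop) _ _)
        (Continuous.intervalIntegrable (by fun_prop) _ _)
      intro s _
      nlinarith [sq_nonneg (f s + f' s)]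
    have e3 : ∫ s in x..y, (f s ^ 2 + f' s ^ 2) ≤ I := by
      apply intervalIntegral.integral_mono_interval le_rfl hy.1 hy.2
      · exact Filter.Eventually.of_forall fun s => by simp only [Pi.zero_apply]; positivity
      · exact Continuous.intervalIntegrable (by fun_prop) _ _
    linarith
  have h2 : ∫ y in x..x+ε, f x ^ 2 ≤ ∫ y in x..x+ε, (f y ^ 2 + I) :=
    intervalIntegral.integral_mono_on hle (Continuous.intervalIntegrable (by fun_prop) _ _)
        (Continuous.intervalIntegrable (by fun_prop) _ _) h1
  have h3 : ∫ y in x..x+ε, f y ^ 2 ≤ I :=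
    intervalIntegral.integral_mono_on hle (Continuous.intervalIntegrable (by fun_prop) _ _)
        (Continuous.intervalIntegrable (by fun_prop) _ _) (fun s _ => by nlinarith [sq_nonneg (f' s)])
  rw [intervalIntegral.integral_add (Continuous.intervalIntegrable (by fun_prop) _ _)
    (Continuous.intervalIntegrable (by fun_prop) _ _), intervalIntegral.integral_const,
    intervalIntegral.integral_const] at h2
  simp only [add_sub_cancel_left, smul_eq_mul] at h2
  have h4 : ε * f x ^ 2 ≤ I + ε * I := by linarith
  have h5 : ε⁻¹ * (ε * f x ^ 2) ≤ ε⁻¹ * (I + ε * I) := by gcongr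
  have h6 : ε⁻¹ * (ε * f x ^ 2) = f x ^ 2 := by field_simp
  have h7 : ε⁻¹ * (I + ε * I) = (ε⁻¹ + 1) * I := by field_simp
  linarith

lemma sob1' {f f' : ℝ → ℝ} (hf : ∀ s, HasDerivAt f (f' s) s) (hc' : Continuous f') (x : ℝ) {ε : ℝ}
    (hε : 0 < ε) :
    ENNReal.ofReal (f x ^ 2) ≤ ENNReal.ofReal (ε⁻¹ + 1) *
      ∫⁻ s in Set.Ioc x (x+ε), ENNReal.ofReal (f s ^ 2 + f' s ^ 2) := by
  have hc : Continuous f := continuous_iff_continuousAt.2 fun s => (hf s).continuousAt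
  rw [← ofReal_integral_eq_lintegral_ofReal, ← ENNReal.ofReal_mul (by positivity),
    ← intervalIntegral.integral_of_le (by linarith)]
  · exact ENNReal.ofReal_le_ofReal (sob1 hf hc' x hε)
  · have : IntervalIntegrable (fun s => f s ^ 2 + f' s ^ 2) volume x (x+ε) :=
      Continuous.intervalIntegrable (by fun_prop) _ _
    exact (intervalIntegrable_iff_integrableOn_Ioc_of_le (by linarith)).1 this
  · exact Filter.Eventually.of_forall fun s => by simp only [Pi.zero_apply]; positivity

noncomputable def Dsum : List (Fin d) → (ℝ × (Fin d → ℝ) → ℝ) → ℝ × (Fin d → ℝ) → ℝ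
  | [], f => fun p => f p ^ 2
  | i :: l, f => fun p => Dsum l f p + Dsum l (pdx i f) p

lemma Dsum_nonneg (l : List (Fin d)) : ∀ f p, 0 ≤ Dsum l f p := by
  induction l with
  | nil => intro f p; exact sq_nonneg _
  | cons i l ih => intro f p; exact add_nonneg (ih _ _) (ih _ _)

lemma Dsum_cont (l : List (Fin d)) : ∀ f, Sm f → Continuous (Dsum l f) := by
  induction l with
  | nil => intro f hf; exact hf.cont.pow 2
  | cons i l ih => intro f hf; exact (ih _ hf).add (ih _ (hf.pdx i))

lemma Dsum_marg (z : Fin d → ℝ) {ε : ℝ} (hε : 0 < ε) (t : ℝ) (l : List (Fin d)) : l.Nodup →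
    ∀ f, Sm f → ∀ x : Fin d → ℝ, (∀ i ∈ l, x i = z i) →
    ENNReal.ofReal (f (t, x) ^ 2) ≤ ENNReal.ofReal (ε⁻¹ + 1) ^ l.length *
      lmarginal (fun i => (volume : Measure ℝ).restrict (Set.Ioc (z i) (z i + ε))) l.toFinset
        (fun y => ENNReal.ofReal (Dsum l f (t, y))) x := by
  induction l with
  | nil => intro _ f hf x hx; simp [Dsum]
  | cons i l ih =>
    intro hn f hf x hx
    rw [List.nodup_cons] at hn
    have hm : ∀ g, Sm g → Measurable fun y => ENNReal.ofReal (Dsum l g (t, y)) := by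
      intro g hg
      have := Dsum_cont l g hg
      exact (ENNReal.continuous_ofReal.comp (by fun_prop)).measurable
    rw [List.toFinset_cons, lmarginal_insert]
    rotate_left
    · have := Dsum_cont (i::l) f hf
      exact (ENNReal.continuous_ofReal.comp (by fun_prop)).measurable
    · simpa using hn.1
    have hu : Function.update x i (z i) = x := by
      rw [← hx i (by simp)]; simp
    have h1 := sob1' (fun s => hasDerivAt_space hf t x i s)
      (by have := (hf.pdx i).cont; fun_prop) (z i) hε
    simp only [hu] at h1
    refine h1.trans ?_
    rw [List.length_cons, pow_succ', mul_assoc]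
    gcongr
    rw [← lintegral_const_mul' _ _ (by simp)]
    refine lintegral_mono fun s => ?_
    have hx' : ∀ j ∈ l, Function.update x i s j = z j := by
      intro j hj
      have : j ≠ i := fun h => hn.1 (h ▸ hj)
      rw [Function.update_of_ne this]
      exact hx j (by simp [hj])
    have a1 := ih hn.2 f hf _ hx'
    have a2 := ih hn.2 (pdx i f) (hf.pdx i) _ hx'
    have e : (fun y => ENNReal.ofReal (Dsum (i::l) f (t, y))) =
        fun y => ENNReal.ofReal (Dsum l f (t, y)) + ENNReal.ofReal (Dsum l (pdx i f) (t, y)) := by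
      funext y
      rw [← ENNReal.ofReal_add (Dsum_nonneg _ _ _) (Dsum_nonneg _ _ _)]; rfl
    rw [e, ENNReal.ofReal_add (sq_nonneg _) (sq_nonneg _)]
    refine (add_le_add a1 a2).trans ?_
    rw [← mul_add]
    gcongr
    unfold lmarginal
    rw [lintegral_add_left]
    exact (hm f hf).comp measurable_updateFinset

lemma box_sub {t : ℝ} {x : Fin d → ℝ} (hp : (t, x) ∈ Qc d (1/4)) {ε : ℝ} (hε : 0 < ε)
    (hd : ε * (d + 1) ≤ 1/8) :
    Set.Ioc t (t+ε) ×ˢ (Set.univ.pi fun i => Set.Ioc (x i) (x i + ε)) ⊆ Qc d (1/2) := by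
  rintro ⟨s, y⟩ ⟨hs, hy⟩
  obtain ⟨ht, hx⟩ := hp
  simp only [Set.mem_Ioc, Set.mem_pi, Set.mem_univ, true_implies, Set.mem_Ioo] at hs hy ht
  have hx : ∑ j, (x j)^2 < (1/4:ℝ)^2 := hx
  have hdn : (0:ℝ) ≤ d := by positivity
  have hε8 : ε ≤ 1/8 := by nlinarith
  refine ⟨⟨by linarith, ?_⟩, ?_⟩
  · show s < (1/2:ℝ)^2
    norm_num at ht ⊢; linarith
  · show ∑ j, (y j)^2 < (1/2:ℝ)^2
    have : ∀ j, (y j)^2 ≤ 2 * (x j)^2 + 2 * ε^2 := by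
      intro j
      have := hy j
      have h1 : (y j - x j)^2 ≤ ε^2 := by
        have : 0 ≤ y j - x j := by linarith [(hy j).1]
        have : y j - x j ≤ ε := by linarith [(hy j).2]
        gcongr
      nlinarith [sq_nonneg (x j - (y j - x j))]
    have h2 := Finset.sum_le_sum fun j (_ : j ∈ Finset.univ) => this j
    rw [Finset.sum_add_distrib, ← Finset.mul_sum] at h2
    simp only [Finset.sum_const, Finset.card_univ, Fintype.card_fin, nsmul_eq_mul] at h2
    have h3 : (d:ℝ) * (2 * ε^2) ≤ 1/16 := by
      have : d * ε ≤ 1/8 := by nlinarith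
      nlinarith
    norm_num at hx ⊢
    linarith

lemma sob (l : List (Fin d)) (hl : l.Nodup) (hu : l.toFinset = Finset.univ) :
    ∃ K : ℝ, 0 ≤ K ∧ ∀ W, Sm W → ∀ p ∈ Qc d (1/4),
      W p ^ 2 ≤ K * ∫ q in Qc d (1/2), (Dsum l W q + Dsum l (pdt W) q) := by
  set ε : ℝ := (8 * (d+1))⁻¹ with hεd
  have hε : 0 < ε := by positivity
  have hε2 : ε * (d+1) ≤ 1/8 := by rw [hεd]; apply le_of_eq; field_simp
  refine ⟨(ε⁻¹ + 1) * (ε⁻¹ + 1) ^ l.length, by positivity, ?_⟩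
  rintro W hW ⟨t, x⟩ hp
  set G := fun q => Dsum l W q + Dsum l (pdt W) q with hG
  have hGc : Continuous G := (Dsum_cont l W hW).add (Dsum_cont l _ hW.pdt)
  have hG0 : ∀ q, 0 ≤ G q := fun q => add_nonneg (Dsum_nonneg _ _ _) (Dsum_nonneg _ _ _)
  have hGm : Measurable fun q => ENNReal.ofReal (G q) := (ENNReal.continuous_ofReal.comp (by fun_prop)).measurable
  have key : ENNReal.ofReal (W (t, x) ^ 2) ≤ ENNReal.ofReal ((ε⁻¹ + 1) * (ε⁻¹ + 1) ^ l.length)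
      * ∫⁻ q in Qc d (1/2), ENNReal.ofReal (G q) := by
    have b1 : ∫⁻ q in Set.Ioc t (t+ε) ×ˢ (Set.univ.pi fun i => Set.Ioc (x i) (x i + ε)),
        ENNReal.ofReal (G q) ≤ ∫⁻ q in Qc d (1/2), ENNReal.ofReal (G q) :=
      lintegral_mono_set (box_sub hp hε hε2)
    refine le_trans ?_ (mul_le_mul_right b1 _)
    rw [Measure.volume_eq_prod, ← Measure.prod_restrict, lintegral_prod _ hGm.aemeasurable]
    have h1 := sob1' (fun s => hasDerivAt_time hW x s)
      (by have := (hW.pdt).cont; fun_prop) t hε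
    refine h1.trans ?_
    rw [ENNReal.ofReal_mul (by positivity), mul_assoc, ENNReal.ofReal_pow (by positivity)]
    gcongr
    rw [← lintegral_const_mul' _ _ (by simp)]
    refine lintegral_mono fun s => ?_
    have a1 := Dsum_marg x hε s l hl W hW x (fun _ _ => rfl)
    have a2 := Dsum_marg x hε s l hl (pdt W) hW.pdt x (fun _ _ => rfl)
    rw [hu, lmarginal_univ] at a1 a2
    rw [ENNReal.ofReal_add (sq_nonneg _) (sq_nonneg _)]
    refine (add_le_add a1 a2).trans ?_
    rw [← mul_add, volume_pi, Measure.restrict_pi_pi, ← lintegral_add_left]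
    · gcongr with y
      rw [← ENNReal.ofReal_add (Dsum_nonneg _ _ _) (Dsum_nonneg _ _ _)]
    · have := Dsum_cont l W hW
      exact (ENNReal.continuous_ofReal.comp (by fun_prop)).measurable
  rw [← ofReal_integral_eq_lintegral_ofReal (intOn (by norm_num) hGc)
    (Filter.Eventually.of_forall hG0), ← ENNReal.ofReal_mul (by positivity)] at key
  exact (ENNReal.ofReal_le_ofReal_iff (mul_nonneg (by positivity) (int_nonneg hG0))).1 key
end sob


section sol
variable {d : ℕ}

structure Sol (o : Fin d) (a : ℝ → Fin d → Fin d → ℝ) (W : ℝ × (Fin d → ℝ) → ℝ) : Prop where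
  sm : Sm W
  eq : ∀ p ∈ Qc d 1, Lop o a W p = 0

lemma dir_zero {f : ℝ × (Fin d → ℝ) → ℝ} {U : Set (ℝ × (Fin d → ℝ))} (hU : IsOpen U)
    (h : ∀ p ∈ U, f p = 0) {p} (hp : p ∈ U) : fderiv ℝ f p = 0 := by
  have : f =ᶠ[nhds p] fun _ => 0 := Filter.eventually_of_mem (hU.mem_nhds hp) h
  rw [this.fderiv_eq]; simp

lemma Sol.pdt {o : Fin d} {δ : ℝ} {a} (C : Coef o δ a) {W} (h : Sol o a W) : Sol o a (pdt W) :=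
  ⟨h.sm.pdt, fun p hp => by
    rw [C.L_pdt h.sm]; simp [_root_.pdt, dir_zero (isOpen_Qc d 1) h.eq hp]⟩

lemma Sol.pdx {o : Fin d} {δ : ℝ} {a} (C : Coef o δ a) {W} (h : Sol o a W) {k : Fin d} (hk : k ≠ o) :
    Sol o a (pdx k W) :=
  ⟨h.sm.pdx k, fun p hp => by
    rw [C.L_pdx h.sm hk]; simp [_root_.pdx, dir_zero (isOpen_Qc d 1) h.eq hp]⟩

lemma solE (o : Fin d) (δ : ℝ) {ρ R : ℝ} (hρ : 0 < ρ) (hρR : ρ < R) (hR1 : R ≤ 1) :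
    ∃ N : ℝ, 0 ≤ N ∧ ∀ a, Coef o δ a → ∀ W, Sol o a W →
      (∀ j, ∫ p in Qc d ρ, pdx j W p ^ 2 ≤ N * ∫ p in Qc d R, W p ^ 2) ∧
      (∀ j k, ∫ p in Qc d ρ, pdxx j k W p ^ 2 ≤ N * ∫ p in Qc d R, W p ^ 2) ∧
      ∫ p in Qc d ρ, pdt W p ^ 2 ≤ N * ∫ p in Qc d R, W p ^ 2 := by
  obtain ⟨N, hN, H⟩ := Eest (o := o) (δ := δ) hρ hρR
  refine ⟨N, hN, fun a C W hW => ?_⟩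
  have e : ∫ p in Qc d R, (W p ^ 2 + Lop o a W p ^ 2) = ∫ p in Qc d R, W p ^ 2 := by
    refine setIntegral_congr_fun (isOpen_Qc d R).measurableSet fun p hp => ?_
    simp [hW.eq p (Qc_mono (hρ.trans hρR).le hR1 hp)]
  have := H a C W hW.sm
  rwa [e] at this

lemma sol_iter (o : Fin d) (δ : ℝ) (l : List (Fin d)) : o ∉ l → ∀ {ρ R : ℝ}, 0 < ρ → ρ < R → R ≤ 1 →
    ∃ N : ℝ, 0 ≤ N ∧ ∀ a, Coef o δ a → ∀ W, Sol o a W →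
      ∫ p in Qc d ρ, (Dsum (l ++ [o]) W p + Dsum (l ++ [o]) (pdx o W) p) ≤
        N * ∫ p in Qc d R, W p ^ 2 := by
  induction l with
  | nil =>
    intro _ ρ R hρ hρR hR1
    obtain ⟨N, hN, H⟩ := solE o δ hρ hρR hR1
    refine ⟨1 + 2 * N + N, by positivity, fun a C W hW => ?_⟩
    obtain ⟨h1, h2, -⟩ := H a C W hW
    have h1 := h1 o
    have h2 := h2 o o
    have hs := hW.sm
    have hc := hs.cont
    have h0 : ∫ p in Qc d ρ, W p ^ 2 ≤ ∫ p in Qc d R, W p ^ 2 :=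
      int_mono_set hρ.le hρR.le (by fun_prop) (fun p => sq_nonneg _)
    have e : ∫ p in Qc d ρ, (Dsum ([] ++ [o]) W p + Dsum ([] ++ [o]) (pdx o W) p) =
        ∫ p in Qc d ρ, (W p ^ 2 + 2 * pdx o W p ^ 2 + pdxx o o W p ^ 2) := by
      congr 1; funext p; simp only [List.nil_append, Dsum, pdxx]; ring
    rw [e, int_add hρ.le (by fun_prop) (by fun_prop), int_add hρ.le (by fun_prop) (by fun_prop),
      integral_const_mul]
    linarith
  | cons i l ih =>
    intro ho ρ R hρ hρR hR1
    simp only [List.mem_cons, not_or] at ho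
    set m := (ρ + R)/2 with hm
    have m1 : ρ < m := by rw [hm]; linarith
    have m2 : m < R := by rw [hm]; linarith
    obtain ⟨N, hN, H⟩ := ih ho.2 hρ m1 (by linarith)
    obtain ⟨N', hN', H'⟩ := solE o δ (hρ.trans m1) m2 hR1
    refine ⟨N + N * N', by positivity, fun a C W hW => ?_⟩
    have hi : i ≠ o := fun h => ho.1 h.symm
    have h1 := H a C W hW
    have h2 := H a C _ (hW.pdx C hi)
    have h3 := (H' a C W hW).1 i
    have hs := hW.sm
    have hc := hs.cont
    have h0 : ∫ p in Qc d m, W p ^ 2 ≤ ∫ p in Qc d R, W p ^ 2 :=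
      int_mono_set (by linarith) m2.le (by fun_prop) (fun p => sq_nonneg _)
    have e : ∫ p in Qc d ρ, (Dsum (i :: l ++ [o]) W p + Dsum (i :: l ++ [o]) (pdx o W) p) =
        ∫ p in Qc d ρ, ((Dsum (l ++ [o]) W p + Dsum (l ++ [o]) (pdx o W) p) +
          (Dsum (l ++ [o]) (pdx i W) p + Dsum (l ++ [o]) (pdx o (pdx i W)) p)) := by
      congr 1; funext p; simp only [List.cons_append, Dsum]; rw [pdx_pdx hs i o]; ring
    have c1 := Dsum_cont (l ++ [o]) W hs
    have c2 := Dsum_cont (l ++ [o]) _ (hs.pdx o)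
    have c3 := Dsum_cont (l ++ [o]) _ (hs.pdx i)
    have c4 := Dsum_cont (l ++ [o]) _ ((hs.pdx i).pdx o)
    rw [e, int_add hρ.le (by fun_prop) (by fun_prop)]
    have h4 := mul_le_mul_of_nonneg_left h0 hN
    have h5 := mul_le_mul_of_nonneg_left h3 hN
    linarith

lemma sol_sup (o : Fin d) (δ : ℝ) :
    ∃ K : ℝ, 0 ≤ K ∧ ∀ a, Coef o δ a → ∀ W, Sol o a W → ∀ p ∈ Qc d (1/4),
      W p ^ 2 ≤ K * ∫ p in Qc d (5/8), W p ^ 2 ∧ pdx o W p ^ 2 ≤ K * ∫ p in Qc d (5/8), W p ^ 2 := by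
  set l := (Finset.univ.erase o).toList with hl
  have ho : o ∉ l := by simp [hl]
  have hnd : (l ++ [o]).Nodup := by
    rw [List.nodup_append]
    refine ⟨Finset.nodup_toList _, by simp, ?_⟩
    intro a ha b hb
    simp only [List.mem_singleton] at hb
    subst hb
    exact fun h => ho (h ▸ ha)
  have hun : (l ++ [o]).toFinset = Finset.univ := by
    ext j; by_cases hj : j = o <;> simp [hl, hj]
  obtain ⟨K, hK, HK⟩ := sob (l ++ [o]) hnd hun
  obtain ⟨N, hN, H⟩ := sol_iter o δ l ho (ρ := 1/2) (R := 9/16) (by norm_num) (by norm_num) (by norm_num)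
  obtain ⟨N', hN', H'⟩ := solE o δ (ρ := 9/16) (R := 5/8) (by norm_num) (by norm_num) (by norm_num)
  refine ⟨K * (N + N * N'), by positivity, fun a C W hW p hp => ?_⟩
  have hs := hW.sm
  have hc := hs.cont
  set I := ∫ p in Qc d (5/8), W p ^ 2
  set T : ℝ × (Fin d → ℝ) → ℝ := fun q => (Dsum (l ++ [o]) W q + Dsum (l ++ [o]) (pdx o W) q) +
          (Dsum (l ++ [o]) (pdt W) q + Dsum (l ++ [o]) (pdx o (pdt W)) q) with hT
  have c1 := Dsum_cont (l ++ [o]) W hs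
  have c2 := Dsum_cont (l ++ [o]) _ (hs.pdx o)
  have c3 := Dsum_cont (l ++ [o]) _ hs.pdt
  have c4 := Dsum_cont (l ++ [o]) _ (hs.pdt.pdx o)
  have hTb : ∫ q in Qc d (1/2), T q ≤ (N + N * N') * I := by
    simp only [hT]
    rw [int_add (by norm_num) (by fun_prop) (by fun_prop)]
    have h1 := H a C W hW
    have h2 := H a C _ (hW.pdt C)
    have h3 := (H' a C W hW).2.2
    have h0 : ∫ p in Qc d (9/16), W p ^ 2 ≤ I :=
      int_mono_set (by norm_num) (by norm_num) (by fun_prop) (fun p => sq_nonneg _)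
    have h4 := mul_le_mul_of_nonneg_left h0 hN
    have h5 := mul_le_mul_of_nonneg_left h3 hN
    linarith
  have hmul := mul_le_mul_of_nonneg_left hTb hK
  rw [← mul_assoc] at hmul
  have n1 := Dsum_nonneg (l ++ [o]) W
  have n2 := Dsum_nonneg (l ++ [o]) (pdx o W)
  have n3 := Dsum_nonneg (l ++ [o]) (pdt W)
  have n4 := Dsum_nonneg (l ++ [o]) (pdx o (pdt W))
  constructor
  · refine (HK W hs p hp).trans (le_trans ?_ hmul)
    refine mul_le_mul_of_nonneg_left ?_ hK
    refine int_mono (by norm_num) (c1.add c3) ((c1.add c2).add (c3.add c4)) fun q _ => ?_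
    have := n2 q; have := n4 q; simp only [hT]; linarith
  · refine (HK _ (hs.pdx o) p hp).trans (le_trans ?_ hmul)
    rw [← pdx_pdt hs o]
    refine mul_le_mul_of_nonneg_left ?_ hK
    refine int_mono (by norm_num) (c2.add c4) ((c1.add c2).add (c3.add c4)) fun q _ => ?_
    have := n1 q; have := n3 q; simp only [hT]; linarith

lemma sol_supD (o : Fin d) (δ : ℝ) :
    ∃ K : ℝ, 0 ≤ K ∧ ∀ a, Coef o δ a → ∀ W, Sol o a W → ∀ p ∈ Qc d (1/4),
      pdt W p ^ 2 ≤ K * ∫ p in Qc d (3/4), W p ^ 2 ∧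
      (∀ k, pdx k W p ^ 2 ≤ K * ∫ p in Qc d (3/4), W p ^ 2) ∧
      (∀ k, k ≠ o → pdx o (pdx k W) p ^ 2 ≤ K * ∫ p in Qc d (3/4), W p ^ 2) := by
  obtain ⟨K, hK, HK⟩ := sol_sup o δ
  obtain ⟨N, hN, H⟩ := solE o δ (ρ := 5/8) (R := 3/4) (by norm_num) (by norm_num) (by norm_num)
  refine ⟨K + K * N, by positivity, fun a C W hW p hp => ?_⟩
  obtain ⟨h1, -, h2⟩ := H a C W hW
  have hs := hW.sm
  have hc := hs.cont
  set I := ∫ p in Qc d (3/4), W p ^ 2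
  have hI : 0 ≤ I := int_nonneg fun p => sq_nonneg _
  have h0 : ∫ p in Qc d (5/8), W p ^ 2 ≤ I :=
      int_mono_set (by norm_num) (by norm_num) (by fun_prop) (fun p => sq_nonneg _)
  have q0 := mul_le_mul_of_nonneg_left h0 hK
  have q1 := fun k => mul_le_mul_of_nonneg_left (h1 k) hK
  have q2 := mul_le_mul_of_nonneg_left h2 hK
  have p1 : 0 ≤ K * I := by positivity
  have p2 : 0 ≤ K * (N * I) := by positivity
  refine ⟨?_, fun k => ?_, fun k hk => ?_⟩
  · have := (HK a C _ (hW.pdt C) p hp).1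
    linarith
  · by_cases hk : k = o
    · have := (HK a C _ hW p hp).2
      rw [hk]; linarith
    · have := (HK a C _ (hW.pdx C hk) p hp).1
      have := q1 k
      linarith
  · have := (HK a C _ (hW.pdx C hk) p hp).2
    have := q1 k
    linarith
end sol


section unit
variable {d : ℕ}

lemma Lop_sub {o : Fin d} {a} {f g : ℝ × (Fin d → ℝ) → ℝ} (hf : Sm f) (hg : Sm g) (p) :
    Lop o a (fun q => f q - g q) p = Lop o a f p - Lop o a g p := by
  simp only [Lop, pdxx]
  rw [pdt_sub hf hg]
  have : ∀ j k, pdx j (pdx k (fun q => f q - g q)) p = pdx j (pdx k f) p - pdx j (pdx k g) p := by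
    intro j k
    rw [pdx_sub hf hg, pdx_sub (hf.pdx k) (hg.pdx k)]
  simp only [this, mul_sub, Finset.sum_sub_distrib]
  ring

noncomputable def H2 (u : ℝ × (Fin d → ℝ) → ℝ) : ℝ × (Fin d → ℝ) → ℝ :=
  fun p => ∑ j, ∑ k, pdxx j k u p ^ 2

lemma H2_nonneg (u : ℝ × (Fin d → ℝ) → ℝ) (p) : 0 ≤ H2 u p :=
  Finset.sum_nonneg fun _ _ => Finset.sum_nonneg fun _ _ => sq_nonneg _
lemma H2_cont {u : ℝ × (Fin d → ℝ) → ℝ} (hu : Sm u) : Continuous (H2 u) := by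
  unfold H2; fun_prop
lemma H2_ge (u : ℝ × (Fin d → ℝ) → ℝ) (j k p) : pdxx j k u p ^ 2 ≤ H2 u p := by
  refine le_trans ?_ (Finset.single_le_sum (f := fun j => ∑ k, pdxx j k u p ^ 2)
    (fun j _ => Finset.sum_nonneg fun _ _ => sq_nonneg _) (Finset.mem_univ j))
  exact Finset.single_le_sum (f := fun k => pdxx j k u p ^ 2)
    (fun j _ => sq_nonneg _) (Finset.mem_univ k)

lemma ut_bound {o : Fin d} {δ : ℝ} {a} (C : Coef o δ a) (u : ℝ × (Fin d → ℝ) → ℝ) (p) :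
    pdt u p ^ 2 ≤ 2 * Lop o a u p ^ 2 + 2 * d^2 * δ⁻¹^2 * H2 u p := by
  have hδ := C.pos
  set β : Fin d → Fin d → ℝ := fun j k => a (p.2 o) j k * pdxx j k u p with hβ
  have h1 : pdt u p = Lop o a u p - ∑ j, ∑ k, β j k := by simp [Lop, hβ]
  have h2 : (∑ j, ∑ k, β j k)^2 ≤ d^2 * ∑ j, ∑ k, β j k ^ 2 := by
    have e1 := sq_sum_le_card_mul_sum_sq (s := Finset.univ) (f := fun j => ∑ k, β j k)
    have e2 : ∀ j, (∑ k, β j k)^2 ≤ d * ∑ k, β j k ^2 := fun j => by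
      simpa using sq_sum_le_card_mul_sum_sq (s := Finset.univ) (f := fun k => β j k)
    simp only [Finset.card_univ, Fintype.card_fin] at e1
    refine e1.trans ?_
    rw [sq, mul_assoc]
    refine mul_le_mul_of_nonneg_left ?_ (by positivity)
    rw [Finset.mul_sum]
    exact Finset.sum_le_sum fun j _ => e2 j
  have h3 : ∑ j, ∑ k, β j k ^ 2 ≤ δ⁻¹^2 * H2 u p := by
    unfold H2
    simp only [Finset.mul_sum]
    refine Finset.sum_le_sum fun j _ => Finset.sum_le_sum fun k _ => ?_
    rw [hβ, mul_pow, ← sq_abs (a (p.2 o) j k)]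
    have := C.abs_le (p.2 o) j k
    gcongr
  rw [h1]
  have h5 : (d:ℝ)^2 * ∑ j, ∑ k, β j k ^ 2 ≤ d^2 * (δ⁻¹^2 * H2 u p) := by gcongr
  nlinarith [sq_nonneg (Lop o a u p + ∑ j, ∑ k, β j k)]

lemma l2bound (o : Fin d) (δ : ℝ) :
    ∃ N : ℝ, 0 ≤ N ∧ ∀ a, Coef o δ a → ∀ u h : ℝ × (Fin d → ℝ) → ℝ, Sm u → Sol o a h →
      (∀ p ∈ pbQc d 1, h p = u p) →
      (∫ p in Qc d (3/4), pdt h p ^ 2 ≤ N * ∫ p in Qc d 1, (Lop o a u p ^ 2 + H2 u p)) ∧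
      ∀ j k, ∫ p in Qc d (3/4), pdxx j k h p ^ 2 ≤ N * ∫ p in Qc d 1, (Lop o a u p ^ 2 + H2 u p) := by
  obtain ⟨N, hN, H⟩ := Eest (o := o) (δ := δ) (ρ := 3/4) (R := 1) (by norm_num) (by norm_num)
  set A := N * (16 * |δ⁻¹| ^ 6 + 1) with hA
  have hA0 : 0 ≤ A := by positivity
  set B := 2 + 2 * (d:ℝ)^2 * δ⁻¹^2 with hB
  have hB0 : 0 ≤ B := by positivity
  refine ⟨2 * A + 2 * B, by positivity, fun a C u h hu hh hb => ?_⟩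
  have hδ := C.pos
  have hδi : |δ⁻¹| = δ⁻¹ := abs_of_pos (by positivity)
  have hhs := hh.sm
  set v : ℝ × (Fin d → ℝ) → ℝ := fun p => h p - u p with hv
  have hvs : Sm v := hhs.sub' hu
  have huc := hu.cont
  have hhc := hhs.cont
  have hvc := hvs.cont
  have hLc := (C.L_sm hu).cont
  have hLvc := (C.L_sm hvs).cont
  have hHc := H2_cont hu
  set I := ∫ p in Qc d 1, (Lop o a u p ^ 2 + H2 u p) with hI
  have hI0 : 0 ≤ I := int_nonneg fun p => add_nonneg (sq_nonneg _) (H2_nonneg _ _)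
  have hLI : ∫ p in Qc d 1, Lop o a v p ^ 2 ≤ I := by
    refine int_mono zero_le_one (by fun_prop) (by fun_prop) fun p hp => ?_
    rw [hv, Lop_sub hhs hu, hh.eq p hp]
    nlinarith [H2_nonneg u p]
  have hen := energy C hvs (fun p hp => by simp [hv, hb p hp])
  obtain ⟨-, h2, h3⟩ := H a C v hvs
  have hS : N * ∫ p in Qc d 1, (v p ^ 2 + Lop o a v p ^ 2) ≤ A * I := by
    rw [int_add zero_le_one (by fun_prop) (by fun_prop), hA, mul_assoc, hδi]
    refine mul_le_mul_of_nonneg_left ?_ hN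
    have := mul_le_mul_of_nonneg_left hLI (show 0 ≤ 16 * δ⁻¹^6 by positivity)
    linarith
  have hub : ∀ g : ℝ × (Fin d → ℝ) → ℝ, Continuous g →
      (∀ p, g p ^ 2 ≤ B * (Lop o a u p ^ 2 + H2 u p)) → ∫ p in Qc d (3/4), g p ^ 2 ≤ B * I := by
    intro g hg hgb
    rw [hI, ← integral_const_mul]
    refine (int_mono_set (s := 1) (by norm_num) (by norm_num) (by fun_prop) (fun p => sq_nonneg _)).trans ?_
    exact int_mono zero_le_one (by fun_prop) (by fun_prop) fun p hp => hgb p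
  have comb : ∀ f g e : ℝ × (Fin d → ℝ) → ℝ, Continuous f → Continuous g → Continuous e →
      (∀ p, e p = f p - g p) → ∫ p in Qc d (3/4), e p ^ 2 ≤ A * I →
      ∫ p in Qc d (3/4), g p ^ 2 ≤ B * I → ∫ p in Qc d (3/4), f p ^ 2 ≤ (2 * A + 2 * B) * I := by
    intro f g e hf hg he hfe b1 b2
    have : ∫ p in Qc d (3/4), f p ^ 2 ≤ ∫ p in Qc d (3/4), (2 * e p ^ 2 + 2 * g p ^ 2) := by
      refine int_mono (by norm_num) (by fun_prop) (by fun_prop) fun p hp => ?_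
      rw [hfe]; nlinarith [sq_nonneg (f p - 2 * g p)]
    rw [int_add (by norm_num) (by fun_prop) (by fun_prop), integral_const_mul, integral_const_mul] at this
    linarith
  have hB2 : 0 ≤ 2 * (d:ℝ)^2 * δ⁻¹^2 := by positivity
  refine ⟨comb (pdt h) (pdt u) (pdt v) (by fun_prop) (by fun_prop) (by fun_prop) ?_ (h3.trans hS)
    (hub _ (by fun_prop) ?_), fun j k => comb (pdxx j k h) (pdxx j k u) (pdxx j k v) (by fun_prop)
      (by fun_prop) (by fun_prop) ?_ ((h2 j k).trans hS) (hub _ (by fun_prop) ?_)⟩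
  · intro p; rw [hv, pdt_sub hhs hu]
  · intro p
    have := ut_bound C u p
    have := H2_nonneg u p
    rw [hB]
    nlinarith [mul_nonneg hB2 (sq_nonneg (Lop o a u p))]
  · intro p; simp only [pdxx]; rw [hv, pdx_sub hhs hu, pdx_sub (hhs.pdx k) (hu.pdx k)]
  · intro p
    have := H2_ge u j k p
    have := H2_nonneg u p
    rw [hB]
    nlinarith [mul_nonneg hB2 (sq_nonneg (Lop o a u p)), mul_nonneg hB2 (H2_nonneg u p),
      sq_nonneg (Lop o a u p)]

lemma unit_est (o : Fin d) (δ : ℝ) :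
    ∃ N : ℝ, 0 ≤ N ∧ ∀ a, Coef o δ a → ∀ u h : ℝ × (Fin d → ℝ) → ℝ, Sm u → Sol o a h →
      (∀ p ∈ pbQc d 1, h p = u p) →
      ∀ w, (w = pdt h ∨ ∃ j k, k ≠ o ∧ w = pdxx j k h) → ∀ p ∈ Qc d (1/4),
      pdt w p ^ 2 ≤ N * ∫ p in Qc d 1, (Lop o a u p ^ 2 + H2 u p) ∧
      ∀ m, pdx m w p ^ 2 ≤ N * ∫ p in Qc d 1, (Lop o a u p ^ 2 + H2 u p) := by
  obtain ⟨N, hN, HN⟩ := l2bound o δ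
  obtain ⟨K, hK, HK⟩ := sol_supD o δ
  set G := 4 * (d:ℝ)^2 * δ⁻¹^4 * (d * d) + 2 * δ⁻¹^2 with hG
  have hG0 : 0 ≤ G := by positivity
  refine ⟨K * N * (1 + G), by positivity, fun a C u h hu hh hb w hw p hp => ?_⟩
  have hδ := C.pos
  obtain ⟨b1, b2⟩ := HN a C u h hu hh hb
  set I := ∫ p in Qc d 1, (Lop o a u p ^ 2 + H2 u p) with hI
  have hI0 : 0 ≤ I := int_nonneg fun p => add_nonneg (sq_nonneg _) (H2_nonneg _ _)
  have hKN : 0 ≤ K * N * I := by positivity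
  have up : ∀ {x : ℝ}, x ≤ K * N * I → x ≤ K * N * (1 + G) * I := by
    intro x hx
    nlinarith [mul_nonneg hKN hG0]
  have hs := hh.sm
  -- bounds for solutions
  have S : ∀ W, Sol o a W → ∫ p in Qc d (3/4), W p ^ 2 ≤ N * I →
      pdt W p ^ 2 ≤ K * N * I ∧ (∀ k, pdx k W p ^ 2 ≤ K * N * I) ∧
      (∀ k, k ≠ o → pdx o (pdx k W) p ^ 2 ≤ K * N * I) := by
    intro W hW hb
    have h1 := mul_le_mul_of_nonneg_left hb hK
    rw [← mul_assoc] at h1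
    obtain ⟨q1, q2, q3⟩ := HK a C W hW p hp
    exact ⟨q1.trans h1, fun k => (q2 k).trans h1, fun k hk => (q3 k hk).trans h1⟩
  have St := S (pdt h) (hh.pdt C) b1
  have Sx : ∀ j k, j ≠ o → k ≠ o → _ := fun j k hj hk => S (pdxx j k h) ((hh.pdx C hk).pdx C hj) (b2 j k)
  rcases hw with rfl | ⟨j, k, hk, rfl⟩
  · exact ⟨up St.1, fun m => up (St.2.1 m)⟩
  by_cases hj : j = o
  swap
  · exact ⟨up (Sx j k hj hk).1, fun m => up ((Sx j k hj hk).2.1 m)⟩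
  rw [hj]
  -- third derivatives
  have T : ∀ i j, ¬ (i = o ∧ j = o) → pdxx i j (pdx k h) p ^ 2 ≤ K * N * I := by
    intro i j hij
    by_cases hj : j = o
    · have hi : i ≠ o := fun h => hij ⟨h, hj⟩
      have : pdxx i j (pdx k h) = pdx j (pdxx i k h) := pdx_pdx (hs.pdx k) i j
      rw [this]
      exact (Sx i k hi hk).2.1 j
    · exact (Sx j k hj hk).2.1 i
  have ekt : pdt (pdx k h) = pdx k (pdt h) := (pdx_pdt hs k).symm
  refine ⟨up ?_, fun m => ?_⟩
  · have : pdt (pdxx o k h) = pdx o (pdx k (pdt h)) := by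
      rw [← ekt]; exact (pdx_pdt (hs.pdx k) o).symm
    rw [this]
    exact St.2.2 k hk
  by_cases hm : m = o
  swap
  · exact up (T m o (fun h => hm h.1))
  rw [hm]
  have hX := Xbound C (pdx k h) p
  rw [(hh.pdx C hk).eq p (Qc_mono (by norm_num) (by norm_num) hp)] at hX
  have hSm : Smix o (pdx k h) p ≤ d * (d * (K * N * I)) := by
    unfold Smix
    have : ∀ i : Fin d, ∑ j, (if i = o ∧ j = o then 0 else pdxx i j (pdx k h) p) ^ 2 ≤ d * (K*N*I) := by
      intro i
      have : ∑ j, (if i = o ∧ j = o then 0 else pdxx i j (pdx k h) p) ^ 2 ≤ ∑ j : Fin d, (K*N*I) := by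
        refine Finset.sum_le_sum fun j _ => ?_
        by_cases h : i = o ∧ j = o
        · simp [h]; exact hKN
        · simp only [h, if_false]; exact T i j h
      simpa using this
    have := Finset.sum_le_sum fun i (_ : i ∈ Finset.univ) => this i
    simpa using this
  have hct : (cc o a p * pdt (pdx k h) p)^2 ≤ δ⁻¹^2 * (K * N * I) := by
    rw [mul_pow, ekt]
    have := C.cc_le p
    have := hδ.le.trans (C.cc_ge p)
    have := St.2.1 k
    gcongr
  have hX2 : 2 * (d:ℝ)^2 * δ⁻¹^4 * Smix o (pdx k h) p ≤ 2 * (d:ℝ)^2 * δ⁻¹^4 * (d * (d * (K * N * I))) := by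
    gcongr
  show pdxx o o (pdx k h) p ^ 2 ≤ _
  set X := cc o a p * pdt (pdx k h) p
  set Y := pdxx o o (pdx k h) p
  have f1 : Y^2 ≤ 2 * (X+Y)^2 + 2 * X^2 := by nlinarith [sq_nonneg (2 * X + Y)]
  have f2 : K * N * (1 + G) * I = K * N * I + G * (K * N * I) := by ring
  rw [f2, hG]
  nlinarith
end unit


section osc
variable {d : ℕ}

lemma avg_le {f : ℝ × (Fin d → ℝ) → ℝ} (hf : Continuous f) {r c : ℝ} (hr : 0 < r)
    (h : ∀ p ∈ Qc d r, f p ≤ c) : avg (Qc d r) f ≤ c := by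
  have hV : 0 < (volume (Qc d r)).toReal :=
    ENNReal.toReal_pos (volQ_pos r hr).ne' (volQ_lt r hr.le).ne
  have h1 := int_mono hr.le hf continuous_const h
  rw [setIntegral_const, smul_eq_mul, Measure.real] at h1
  unfold avg
  rw [inv_mul_le_iff₀ hV]; exact h1

lemma le_avg {f : ℝ × (Fin d → ℝ) → ℝ} (hf : Continuous f) {r c : ℝ} (hr : 0 < r)
    (h : ∀ p ∈ Qc d r, c ≤ f p) : c ≤ avg (Qc d r) f := by
  have hV : 0 < (volume (Qc d r)).toReal :=
    ENNReal.toReal_pos (volQ_pos r hr).ne' (volQ_lt r hr.le).ne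
  have h1 := int_mono hr.le continuous_const hf h
  rw [setIntegral_const, smul_eq_mul, Measure.real] at h1
  unfold avg
  rw [le_inv_mul_iff₀ hV]; exact h1

lemma avg_congr {f g : ℝ × (Fin d → ℝ) → ℝ} {r : ℝ} (h : ∀ p ∈ Qc d r, f p = g p) :
    avg (Qc d r) f = avg (Qc d r) g := by
  unfold avg
  rw [setIntegral_congr_fun (isOpen_Qc d r).measurableSet h]

lemma convex_Qc (r : ℝ) : Convex ℝ (Qc d r) := by
  refine (convex_Ioo _ _).prod ?_
  have : ConvexOn ℝ Set.univ fun x : Fin d → ℝ => ∑ j, (x j)^2 := by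
    refine ⟨convex_univ, fun x _ y _ a b ha hb hab => ?_⟩
    simp only [Pi.add_apply, Pi.smul_apply, smul_eq_mul, Finset.mul_sum, ← Finset.sum_add_distrib]
    refine Finset.sum_le_sum fun j _ => ?_
    have hb' : b = 1 - a := by linarith
    subst hb'
    nlinarith [mul_nonneg (mul_nonneg ha hb) (sq_nonneg (x j - y j))]
  have := this.convex_lt (r^2)
  simpa [ballE] using this

lemma fderiv_coords {w : ℝ × (Fin d → ℝ) → ℝ} (p e : ℝ × (Fin d → ℝ)) :
    fderiv ℝ w p e = e.1 * pdt w p + ∑ j, e.2 j * pdx j w p := by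
  have h : e = e.1 • ((1:ℝ), (0 : Fin d → ℝ)) + ∑ j, e.2 j • ((0:ℝ), (Pi.single j 1 : Fin d → ℝ)) := by
    ext i
    · simp [Prod.fst_sum]
    · simp [Prod.snd_sum, Finset.sum_apply, Pi.single_apply]
  conv_lhs => rw [h]
  simp only [map_add, map_smul, map_sum, smul_eq_mul]
  rfl

lemma osc {w : ℝ × (Fin d → ℝ) → ℝ} (hw : Sm w) {r S : ℝ} (hr : 0 < r) (hr4 : r ≤ 1/4)
    (h1 : ∀ p ∈ Qc d (1/4), pdt w p ^ 2 ≤ S) (h2 : ∀ p ∈ Qc d (1/4), ∀ m, pdx m w p ^ 2 ≤ S)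
    (hS : 0 ≤ S) :
    avg (Qc d r) (fun p => (w p - avg (Qc d r) w)^2) ≤ 4 * (d+1)^2 * S * r^2 := by
  have hwc := hw.cont
  set D := (d+1) * Real.sqrt S with hD
  have hb : ∀ p ∈ Qc d r, ‖fderiv ℝ w p‖ ≤ D := by
    intro p hp
    have hp := Qc_mono hr.le hr4 hp
    refine ContinuousLinearMap.opNorm_le_bound _ (by positivity) fun e => ?_
    rw [fderiv_coords]
    have a1 : |pdt w p| ≤ √S := Real.abs_le_sqrt (h1 p hp)
    have a2 : ∀ m, |pdx m w p| ≤ √S := fun m => Real.abs_le_sqrt (h2 p hp m)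
    have e1 : |e.1| ≤ ‖e‖ := norm_fst_le e
    have e2 : ∀ j, |e.2 j| ≤ ‖e‖ := fun j => (norm_le_pi_norm e.2 j).trans (norm_snd_le e)
    calc ‖e.1 * pdt w p + ∑ j, e.2 j * pdx j w p‖
        ≤ ‖e.1 * pdt w p‖ + ‖∑ j, e.2 j * pdx j w p‖ := norm_add_le _ _
      _ ≤ ‖e‖ * √S + ∑ j : Fin d, ‖e‖ * √S := by
          refine add_le_add ?_ ((norm_sum_le _ _).trans (Finset.sum_le_sum fun j _ => ?_))
          · rw [norm_mul]; exact mul_le_mul e1 a1 (abs_nonneg _) (norm_nonneg _)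
          · rw [norm_mul]; exact mul_le_mul (e2 j) (a2 j) (abs_nonneg _) (norm_nonneg _)
      _ = D * ‖e‖ := by simp [hD]; ring
  have hosc : ∀ p ∈ Qc d r, ∀ q ∈ Qc d r, |w p - w q| ≤ D * (2 * r) := by
    intro p hp q hq
    have h3 := (convex_Qc (d := d) r).norm_image_sub_le_of_norm_fderiv_le (𝕜 := ℝ) (f := w)
      (fun x _ => hw.diff x) hb hq hp
    refine h3.trans (mul_le_mul_of_nonneg_left ?_ (by positivity))
    have hr2 : r^2 ≤ r := by nlinarith
    refine max_le ?_ ?_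
    · have := hp.1; have := hq.1
      simp only [Set.mem_Ioo] at *
      show |p.1 - q.1| ≤ _
      rw [abs_le]; constructor <;> linarith
    · have a := ballE_sub hr.le hp.2
      have b := ballE_sub hr.le hq.2
      rw [mem_closedBall_zero_iff] at a b
      have := norm_sub_le p.2 q.2
      show ‖p.2 - q.2‖ ≤ _
      linarith
  refine avg_le (by fun_prop) hr fun p hp => ?_
  have u1 : avg (Qc d r) w ≤ w p + D * (2*r) := avg_le hwc hr fun q hq => by
    have := (abs_le.1 (hosc p hp q hq)).1; linarith
  have u2 : w p - D * (2*r) ≤ avg (Qc d r) w := le_avg hwc hr fun q hq => by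
    have := (abs_le.1 (hosc p hp q hq)).2; linarith
  have u3 : (w p - avg (Qc d r) w)^2 ≤ (D * (2*r))^2 := by
    rw [sq_le_sq, abs_of_nonneg (a := D * (2*r)) (by positivity), abs_le]
    constructor <;> linarith
  refine u3.trans (le_of_eq ?_)
  rw [hD, mul_pow, mul_pow, Real.sq_sqrt hS]; ring

lemma unit_avg (o : Fin d) (δ : ℝ) :
    ∃ N : ℝ, 0 < N ∧ ∀ a, Coef o δ a → ∀ u h : ℝ × (Fin d → ℝ) → ℝ, Sm u → Sol o a h →
      (∀ p ∈ pbQc d 1, h p = u p) →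
      ∀ w, (w = pdt h ∨ ∃ j k, k ≠ o ∧ w = pdxx j k h) → ∀ r, 0 < r → r ≤ 1/4 →
      avg (Qc d r) (fun p => (w p - avg (Qc d r) w)^2) ≤
        N * r^2 * (avg (Qc d 1) (fun p => Lop o a u p ^ 2) + avg (Qc d 1) (H2 u)) := by
  obtain ⟨N, hN, H⟩ := unit_est o δ
  have hV : 0 < (volume (Qc d 1)).toReal :=
    ENNReal.toReal_pos (volQ_pos 1 one_pos).ne' (volQ_lt 1 zero_le_one).ne
  set V := (volume (Qc d 1)).toReal with hVd
  refine ⟨4 * (d+1)^2 * N * V + 1, by positivity, fun a C u h hu hh hb w hw r hr hr4 => ?_⟩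
  have hws : Sm w := by
    rcases hw with rfl | ⟨j, k, _, rfl⟩
    · exact hh.sm.pdt
    · exact hh.sm.pdxx j k
  have hE := H a C u h hu hh hb w hw
  set I := ∫ p in Qc d 1, (Lop o a u p ^ 2 + H2 u p) with hI
  have hI0 : 0 ≤ I := int_nonneg fun p => add_nonneg (sq_nonneg _) (H2_nonneg _ _)
  have := osc hws hr hr4 (fun p hp => (hE p hp).1) (fun p hp => (hE p hp).2) (by positivity)
  refine this.trans ?_
  have hLc := (C.L_sm hu).cont
  have hHc := H2_cont hu
  have e : avg (Qc d 1) (fun p => Lop o a u p ^ 2) + avg (Qc d 1) (H2 u) = V⁻¹ * I := by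
    unfold avg
    rw [hI, int_add zero_le_one (by fun_prop) (by fun_prop), mul_add]
  rw [e]
  have e2 : (4 * (d+1)^2 * N * V + 1) * r^2 * (V⁻¹ * I) =
      4 * (d+1)^2 * (N * I) * r^2 + r^2 * (V⁻¹ * I) := by
    field_simp
  rw [e2]
  have : 0 ≤ r^2 * (V⁻¹ * I) := by positivity
  linarith
end osc

section scaling
variable {d : ℕ}

noncomputable def scl (d : ℕ) (R : ℝ) : ℝ × (Fin d → ℝ) →L[ℝ] ℝ × (Fin d → ℝ) :=
  ((R^2) • ContinuousLinearMap.fst ℝ ℝ (Fin d → ℝ)).prod (R • ContinuousLinearMap.snd ℝ ℝ (Fin d → ℝ))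

lemma scl_apply (R : ℝ) (p : ℝ × (Fin d → ℝ)) : scl d R p = (R^2 * p.1, R • p.2) := rfl

lemma fderiv_scl {f : ℝ × (Fin d → ℝ) → ℝ} (hf : Sm f) (R : ℝ) (p e : ℝ × (Fin d → ℝ)) :
    fderiv ℝ (fun q => f (scl d R q)) p e = fderiv ℝ f (scl d R p) (scl d R e) := by
  have : HasFDerivAt (fun q => f (scl d R q)) ((fderiv ℝ f (scl d R p)).comp (scl d R)) p :=
    (hf.diff _).hasFDerivAt.comp p (scl d R).hasFDerivAt
  rw [this.fderiv]; rfl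

lemma pdt_scl {f : ℝ × (Fin d → ℝ) → ℝ} (hf : Sm f) (R : ℝ) :
    pdt (fun q => f (scl d R q)) = fun p => R^2 * pdt f (scl d R p) := by
  funext p
  simp only [pdt]
  rw [fderiv_scl hf]
  have : scl d R (1, 0) = R^2 • ((1:ℝ), (0 : Fin d → ℝ)) := by simp [scl_apply]
  rw [this, map_smul, smul_eq_mul]

lemma pdx_scl {f : ℝ × (Fin d → ℝ) → ℝ} (hf : Sm f) (R : ℝ) (j : Fin d) :
    pdx j (fun q => f (scl d R q)) = fun p => R * pdx j f (scl d R p) := by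
  funext p
  simp only [pdx]
  rw [fderiv_scl hf]
  have : scl d R (0, Pi.single j 1) = R • ((0:ℝ), (Pi.single j 1 : Fin d → ℝ)) := by simp [scl_apply]
  rw [this, map_smul, smul_eq_mul]

lemma Sm.scl {f : ℝ × (Fin d → ℝ) → ℝ} (hf : Sm f) (R : ℝ) : Sm (fun q => f (scl d R q)) :=
  hf.comp (_root_.scl d R).contDiff

lemma pdx_cmul {f : ℝ × (Fin d → ℝ) → ℝ} (hf : Sm f) (c : ℝ) (j : Fin d) :
    pdx j (fun q => c * f q) = fun q => c * pdx j f q := by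
  rw [pdx_mul contDiff_const hf, pdx_const]; simp

lemma pdxx_scl {f : ℝ × (Fin d → ℝ) → ℝ} (hf : Sm f) (R : ℝ) (j k : Fin d) :
    pdxx j k (fun q => f (scl d R q)) = fun p => R^2 * pdxx j k f (scl d R p) := by
  simp only [pdxx]
  rw [pdx_scl hf, pdx_cmul ((hf.pdx k).scl R), pdx_scl (hf.pdx k)]
  funext p; ring

lemma Lop_scl {f : ℝ × (Fin d → ℝ) → ℝ} (hf : Sm f) (R : ℝ) (o : Fin d) (a) (p) :
    Lop o (fun s => a (R * s)) (fun q => f (scl d R q)) p = R^2 * Lop o a f (scl d R p) := by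
  simp only [Lop, pdt_scl hf, pdxx_scl hf, mul_add, Finset.mul_sum]
  congr 1
  refine Finset.sum_congr rfl fun j _ => Finset.sum_congr rfl fun k _ => ?_
  simp only [scl_apply, Pi.smul_apply, smul_eq_mul]; ring

lemma scl_mem_Q {R ρ : ℝ} (hR : 0 < R) (p : ℝ × (Fin d → ℝ)) :
    scl d R p ∈ Qc d (R * ρ) ↔ p ∈ Qc d ρ := by
  simp only [Qc, Set.mem_prod, scl_apply, ballE, Set.mem_Ioo]
  have h2 : 0 < R^2 := by positivity
  have e : ∑ j, ((R • p.2) j)^2 = R^2 * ∑ j, (p.2 j)^2 := by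
    simp [Finset.mul_sum, mul_pow]
  show (0 < R^2 * p.1 ∧ R^2 * p.1 < (R*ρ)^2) ∧ ∑ j, ((R • p.2) j)^2 < (R*ρ)^2 ↔
    (0 < p.1 ∧ p.1 < ρ^2) ∧ ∑ j, (p.2 j)^2 < ρ^2
  rw [e, mul_pow, mul_lt_mul_iff_right₀ h2, mul_lt_mul_iff_right₀ h2, mul_pos_iff_of_pos_left h2]

lemma scl_mem_pb {R ρ : ℝ} (hR : 0 < R) (p : ℝ × (Fin d → ℝ)) (hp : p ∈ pbQc d ρ) :
    scl d R p ∈ pbQc d (R * ρ) := by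
  have h2 : 0 < R^2 := by positivity
  have e : ∑ j, ((R • p.2) j)^2 = R^2 * ∑ j, (p.2 j)^2 := by
    simp [Finset.mul_sum, mul_pow]
  rcases hp with ⟨⟨h, h'⟩, hs⟩ | ⟨h, hs⟩
  · left
    have hs : ∑ j, (p.2 j)^2 = ρ^2 := hs
    refine ⟨⟨?_, ?_⟩, ?_⟩
    · show 0 ≤ R^2 * p.1
      positivity
    · show R^2 * p.1 ≤ (R*ρ)^2
      rw [mul_pow]; gcongr
    · show ∑ j, ((R • p.2) j)^2 = (R*ρ)^2
      rw [e, hs, mul_pow]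
  · right
    have hs : ∑ j, (p.2 j)^2 < ρ^2 := hs
    have h : p.1 = ρ^2 := h
    refine ⟨?_, ?_⟩
    · show R^2 * p.1 = (R*ρ)^2
      rw [h, mul_pow]
    · show ∑ j, ((R • p.2) j)^2 < (R*ρ)^2
      rw [e, mul_pow]; gcongr

lemma scl_inv {R : ℝ} (hR : 0 < R) (p : ℝ × (Fin d → ℝ)) : scl d R (scl d R⁻¹ p) = p := by
  simp only [scl_apply]
  ext i
  · simp only [inv_pow]; field_simp
  · simp [smul_smul, hR.ne']

lemma avg_scl {R ρ : ℝ} (hR : 0 < R) (hρ : 0 < ρ) (f : ℝ × (Fin d → ℝ) → ℝ) :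
    avg (Qc d ρ) (fun p => f (scl d R p)) = avg (Qc d (R * ρ)) f := by
  have him : scl d R '' Qc d ρ = Qc d (R * ρ) := by
    ext q; constructor
    · rintro ⟨p, hp, rfl⟩; exact (scl_mem_Q hR p).2 hp
    · intro hq
      refine ⟨scl d R⁻¹ q, ?_, scl_inv hR q⟩
      rw [← scl_mem_Q hR, scl_inv hR]; exact hq
  have hinj : Set.InjOn (scl d R) (Qc d ρ) := by
    intro p _ q _ h
    have h1 := scl_inv (R := R⁻¹) (inv_pos.2 hR) p
    have h2 := scl_inv (R := R⁻¹) (inv_pos.2 hR) q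
    rw [inv_inv] at h1 h2
    rw [← h1, ← h2, h]
  haveI : (volume : Measure (ℝ × (Fin d → ℝ))).IsAddHaarMeasure := by
    rw [Measure.volume_eq_prod]; infer_instance
  have key : ∀ g : ℝ × (Fin d → ℝ) → ℝ, ∫ q in Qc d (R * ρ), g q =
      |(scl d R).det| * ∫ p in Qc d ρ, g (scl d R p) := by
    intro g
    rw [← him, integral_image_eq_integral_abs_det_fderiv_smul volume
      (isOpen_Qc d ρ).measurableSet (fun x _ => (scl d R).hasFDerivAt.hasFDerivWithinAt) hinj g]
    simp only [smul_eq_mul]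
    rw [integral_const_mul]
  have k1 := key (fun _ => 1)
  rw [setIntegral_const, setIntegral_const] at k1
  simp only [smul_eq_mul, mul_one, Measure.real] at k1
  have hV : 0 < (volume (Qc d (R*ρ))).toReal :=
    ENNReal.toReal_pos (volQ_pos _ (by positivity)).ne' (volQ_lt _ (by positivity)).ne
  unfold avg
  rw [key f, k1]
  rw [k1] at hV
  have hdet : |(scl d R).det| ≠ 0 := fun h => by simp [h] at hV
  rw [mul_inv]
  field_simp
end scaling


section final
variable {d : ℕ}

lemma avg_cmul (s : Set (ℝ × (Fin d → ℝ))) (c : ℝ) (f : ℝ × (Fin d → ℝ) → ℝ) :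
    avg s (fun p => c * f p) = c * avg s f := by
  unfold avg
  rw [integral_const_mul]; ring

lemma Coef.scale {o : Fin d} {δ : ℝ} {a} (C : Coef o δ a) (R : ℝ) :
    Coef o δ (fun s => a (R * s)) where
  pos := C.pos
  lt1 := C.lt1
  sm := fun j k => (C.sm j k).comp (contDiff_const.mul contDiff_id)
  symm := fun s j k => C.symm _ j k
  ell := fun s θ => C.ell _ θ

lemma scaled (o : Fin d) (δ : ℝ) :
    ∃ N : ℝ, 0 < N ∧ ∀ a, Coef o δ a → ∀ κ r : ℝ, 4 ≤ κ → 0 < r →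
      ∀ u h : ℝ × (Fin d → ℝ) → ℝ, Sm u → Sm h →
      (∀ p ∈ Qc d (κ * r), Lop o a h p = 0) →
      (∀ p ∈ pbQc d (κ * r), h p = u p) →
      ∀ w, (w = pdt h ∨ ∃ j k, k ≠ o ∧ w = pdxx j k h) →
      avg (Qc d r) (fun p => (w p - avg (Qc d r) w)^2) ≤
        N * κ⁻¹^2 * (avg (Qc d (κ * r)) (fun p => Lop o a u p ^ 2) + avg (Qc d (κ * r)) (H2 u)) := by
  obtain ⟨N, hN, H⟩ := unit_avg o δ
  refine ⟨N, hN, ?_⟩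
  intro a C κ r hκ hr u h hu hh heq hbd w hw
  have hκ0 : 0 < κ := by linarith
  set R := κ * r with hRdef
  have hR : 0 < R := by positivity
  have hRr : R * κ⁻¹ = r := by rw [hRdef]; field_simp
  have hS : Sol o (fun s => a (R * s)) (fun q => h (scl d R q)) := by
    refine ⟨hh.scl R, fun p hp => ?_⟩
    rw [Lop_scl hh, heq, mul_zero]
    have := (scl_mem_Q (ρ := 1) hR p).2 hp
    rwa [mul_one] at this
  have hw' : ((fun p => R^2 * w (scl d R p)) = pdt (fun q => h (scl d R q)) ∨
      ∃ j k, k ≠ o ∧ (fun p => R^2 * w (scl d R p)) = pdxx j k (fun q => h (scl d R q))) := by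
    rcases hw with rfl | ⟨j, k, hk, rfl⟩
    · left; rw [pdt_scl hh]
    · right; exact ⟨j, k, hk, by rw [pdxx_scl hh]⟩
  have hk4 : κ⁻¹ ≤ 1/4 := by
    rw [one_div]; exact inv_anti₀ (by norm_num) hκ
  have key := H _ (C.scale R) (fun q => u (scl d R q)) (fun q => h (scl d R q)) (hu.scl R) hS
    (fun p hp => hbd _ (by
      have := scl_mem_pb (ρ := 1) hR p hp
      rwa [mul_one] at this)) _ hw' κ⁻¹ (inv_pos.2 hκ0) hk4
  have e1 : avg (Qc d κ⁻¹) (fun p => R^2 * w (scl d R p)) = R^2 * avg (Qc d r) w := by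
    rw [avg_cmul, avg_scl hR (inv_pos.2 hκ0), hRr]
  have e2 : avg (Qc d κ⁻¹) (fun p => (R^2 * w (scl d R p) - R^2 * avg (Qc d r) w)^2)
      = R^4 * avg (Qc d r) (fun p => (w p - avg (Qc d r) w)^2) := by
    have hs := avg_scl (d := d) hR (inv_pos.2 hκ0) (fun q => (w q - avg (Qc d r) w)^2)
    rw [hRr] at hs
    have : (fun p => (R^2 * w (scl d R p) - R^2 * avg (Qc d r) w)^2) =
        fun p => R^4 * (fun q => (w q - avg (Qc d r) w)^2) (scl d R p) := by
      funext p; ring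
    rw [this, avg_cmul, hs]
  have e3 : avg (Qc d 1) (fun p => Lop o (fun s => a (R * s)) (fun q => u (scl d R q)) p ^ 2)
      = R^4 * avg (Qc d R) (fun p => Lop o a u p ^ 2) := by
    have hs := avg_scl (d := d) hR one_pos (fun q => Lop o a u q ^ 2)
    rw [mul_one] at hs
    have : (fun p => Lop o (fun s => a (R * s)) (fun q => u (scl d R q)) p ^ 2) =
        fun p => R^4 * (fun q => Lop o a u q ^ 2) (scl d R p) := by
      funext p; rw [Lop_scl hu]; ring
    rw [this, avg_cmul, hs]
  have e4 : avg (Qc d 1) (H2 (fun q => u (scl d R q))) = R^4 * avg (Qc d R) (H2 u) := by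
    have : H2 (fun q => u (scl d R q)) = fun p => R^4 * H2 u (scl d R p) := by
      funext p
      simp only [H2, pdxx_scl hu, Finset.mul_sum]
      refine Finset.sum_congr rfl fun j _ => Finset.sum_congr rfl fun k _ => ?_
      ring
    rw [this, avg_cmul, avg_scl hR one_pos, mul_one]
  rw [e1, e2, e3, e4] at key
  have hR4 : 0 < R^4 := by positivity
  refine le_of_mul_le_mul_left (key.trans (le_of_eq ?_)) hR4
  ring

lemma pb_sub_closure {R : ℝ} (hR : 0 < R) : pbQc d R ⊆ closure (Qc d R) := by
  have h2 : 0 < R^2 := by positivity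
  have hc : closure (Qc d R) = Set.Icc 0 (R^2) ×ˢ closure (ballE d R) := by
    rw [Qc, closure_prod_eq, closure_Ioo h2.ne]
  rw [hc]
  rintro ⟨t, x⟩ (⟨h, hx⟩ | ⟨h, hx⟩)
  · refine ⟨h, ?_⟩
    have hx' : ∑ j, (x j)^2 = R^2 := hx
    have h1 : (1:ℝ) ∈ closure (Set.Ioo (0:ℝ) 1) := by
      rw [closure_Ioo zero_ne_one]; exact ⟨zero_le_one, le_rfl⟩
    have hcont : Continuous fun s : ℝ => s • x := continuous_id.smul continuous_const
    have := map_mem_closure (t := ballE d R) hcont h1 (fun s hs => by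
      show ∑ j, ((s • x) j)^2 < R^2
      have : ∑ j, ((s • x) j)^2 = s^2 * R^2 := by
        rw [← hx', Finset.mul_sum]; simp [mul_pow]
      rw [this]
      have : s^2 < 1 := by nlinarith [hs.1, hs.2]
      nlinarith)
    simpa using this
  · refine ⟨?_, subset_closure hx⟩
    have : t = R^2 := h
    rw [this]; exact ⟨h2.le, le_rfl⟩

lemma globalize {h : ℝ × (Fin d → ℝ) → ℝ} {U K : Set (ℝ × (Fin d → ℝ))} (hU : IsOpen U)
    (hK : IsClosed K) (hKU : K ⊆ U) (hh : ContDiffOn ℝ (⊤ : ℕ∞) h U) :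
    ∃ g : ℝ × (Fin d → ℝ) → ℝ, Sm g ∧ ∀ p ∈ K, g p = h p := by
  obtain ⟨V, hV, hKV, hVU⟩ := normal_exists_closure_subset hK hU hKU
  have hdis : Disjoint Vᶜ K := by
    rw [Set.disjoint_left]; intro x hx hxK; exact hx (hKV hxK)
  obtain ⟨χ, h0, h1, -⟩ := exists_contMDiffMap_zero_one_of_isClosed (n := (⊤ : ℕ∞))
    (modelWithCornersSelf ℝ (ℝ × (Fin d → ℝ))) hV.isClosed_compl hK hdis
  have hχ : ContDiff ℝ (⊤ : ℕ∞) (χ : ℝ × (Fin d → ℝ) → ℝ) := contMDiff_iff_contDiff.1 χ.contMDiff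
  refine ⟨fun p => χ p * h p, ?_, fun p hp => ?_⟩
  · refine contDiff_iff_contDiffAt.2 fun p => ?_
    by_cases hp : p ∈ U
    · exact hχ.contDiffAt.mul (hh.contDiffAt (hU.mem_nhds hp))
    · have hp' : p ∈ (closure V)ᶜ := fun h => hp (hVU h)
      have : (fun p => χ p * h p) =ᶠ[nhds p] fun _ => 0 := by
        filter_upwards [isClosed_closure.isOpen_compl.mem_nhds hp'] with q hq
        have : χ q = 0 := h0 (fun h => hq (subset_closure h))
        rw [this, zero_mul]
      exact contDiffAt_const.congr_of_eventuallyEq this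
  · have : χ p = 1 := h1 hp
    show χ p * h p = h p
    rw [this, one_mul]

lemma pdt_congr_on {g h : ℝ × (Fin d → ℝ) → ℝ} {O : Set (ℝ × (Fin d → ℝ))} (hO : IsOpen O)
    (e : ∀ p ∈ O, g p = h p) : ∀ p ∈ O, pdt g p = pdt h p := by
  intro p hp
  have : g =ᶠ[nhds p] h := Filter.eventually_of_mem (hO.mem_nhds hp) e
  simp only [pdt, this.fderiv_eq]

lemma pdx_congr_on {g h : ℝ × (Fin d → ℝ) → ℝ} {O : Set (ℝ × (Fin d → ℝ))} (hO : IsOpen O)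
    (j : Fin d) (e : ∀ p ∈ O, g p = h p) : ∀ p ∈ O, pdx j g p = pdx j h p := by
  intro p hp
  have : g =ᶠ[nhds p] h := Filter.eventually_of_mem (hO.mem_nhds hp) e
  simp only [pdx, this.fderiv_eq]

lemma pdxx_congr_on {g h : ℝ × (Fin d → ℝ) → ℝ} {O : Set (ℝ × (Fin d → ℝ))} (hO : IsOpen O)
    (j k : Fin d) (e : ∀ p ∈ O, g p = h p) : ∀ p ∈ O, pdxx j k g p = pdxx j k h p :=
  pdx_congr_on hO j (pdx_congr_on hO k e)

lemma var_congr {g h : ℝ × (Fin d → ℝ) → ℝ} {r : ℝ} (e : ∀ p ∈ Qc d r, g p = h p) :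
    avg (Qc d r) (fun p => (g p - avg (Qc d r) g)^2) =
    avg (Qc d r) (fun p => (h p - avg (Qc d r) h)^2) := by
  rw [avg_congr e]
  exact avg_congr fun p hp => by rw [e p hp]

end final

theorem stmt12 (d : ℕ) (hd : 2 ≤ d) (δ : ℝ) (hδ : δ ∈ Set.Ioo (0 : ℝ) 1) :
    ∃ N : ℝ, 0 < N ∧
      ∀ a : ℝ → Fin d → Fin d → ℝ,
        (∀ j k, ContDiff ℝ (⊤ : ℕ∞) fun s => a s j k) →
        (∀ s j k, a s j k = a s k j) →
        (∀ (s : ℝ) (θ : Fin d → ℝ),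
          δ * ∑ j, (θ j) ^ 2 ≤ ∑ j, ∑ k, a s j k * θ j * θ k ∧
          ∑ j, ∑ k, a s j k * θ j * θ k ≤ δ⁻¹ * ∑ j, (θ j) ^ 2) →
        ∀ κ r : ℝ, 4 ≤ κ → 0 < r →
          ∀ u : ℝ × (Fin d → ℝ) → ℝ, ContDiff ℝ (⊤ : ℕ∞) u → HasCompactSupport u →
            ∀ (h : ℝ × (Fin d → ℝ) → ℝ) (U : Set (ℝ × (Fin d → ℝ))),
              IsOpen U → closure (Qc d (κ * r)) ⊆ U → ContDiffOn ℝ (⊤ : ℕ∞) h U →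
              (∀ p ∈ Qc d (κ * r),
                pdt h p + ∑ j, ∑ k, a (p.2 ⟨0, by omega⟩) j k * pdxx j k h p = 0) →
              (∀ p ∈ pbQc d (κ * r), h p = u p) →
              (avg (Qc d r) (fun p => (pdt h p - avg (Qc d r) (pdt h)) ^ 2)
                  ≤ N * κ⁻¹ ^ 2 *
                    (avg (Qc d (κ * r)) (fun p =>
                        (pdt u p
                          + ∑ j, ∑ k, a (p.2 ⟨0, by omega⟩) j k * pdxx j k u p) ^ 2)
                      + avg (Qc d (κ * r)) (fun p => ∑ j, ∑ k, (pdxx j k u p) ^ 2))) ∧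
              ∀ j k : Fin d, k.val ≠ 0 →
                avg (Qc d r) (fun p => (pdxx j k h p - avg (Qc d r) (pdxx j k h)) ^ 2)
                  ≤ N * κ⁻¹ ^ 2 *
                    (avg (Qc d (κ * r)) (fun p =>
                        (pdt u p
                          + ∑ j', ∑ k', a (p.2 ⟨0, by omega⟩) j' k' * pdxx j' k' u p) ^ 2)
                      + avg (Qc d (κ * r)) (fun p => ∑ j', ∑ k', (pdxx j' k' u p) ^ 2)) := by

  obtain ⟨N, hN, H⟩ := scaled (⟨0, by omega⟩ : Fin d) δ
  refine ⟨N, hN, ?_⟩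
  intro a hsm hsymm hell κ r hκ hr u hu _ h U hU hcU hh heq hbd
  have hR : 0 < κ * r := by nlinarith
  obtain ⟨g, hg, hgh⟩ := globalize hU isClosed_closure hcU hh
  have hO : IsOpen (Qc d (κ * r)) := isOpen_Qc d (κ * r)
  have e : ∀ p ∈ Qc d (κ * r), g p = h p := fun p hp => hgh p (subset_closure hp)
  have hsub : Qc d r ⊆ Qc d (κ * r) := by
    have h2 : r^2 ≤ (κ*r)^2 := by
      apply pow_le_pow_left₀ hr.le; nlinarith
    rintro p ⟨⟨h1, h3⟩, h4⟩
    exact ⟨⟨h1, h3.trans_le h2⟩, lt_of_lt_of_le h4 h2⟩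
  have C : Coef (⟨0, by omega⟩ : Fin d) δ a := ⟨hδ.1, hδ.2, hsm, hsymm, hell⟩
  have M := H a C κ r hκ hr u g hu hg (fun p hp => by
      have := heq p hp
      simp only [Lop]
      rw [pdt_congr_on hO e p hp]
      simp only [pdxx_congr_on hO _ _ e p hp]
      exact this)
    (fun p hp => (hgh p (pb_sub_closure hR hp)).trans (hbd p hp))
  constructor
  · have := M (pdt g) (Or.inl rfl)
    rw [var_congr fun p hp => pdt_congr_on hO e p (hsub hp)] at this
    exact this
  · intro j k hk
    have := M (pdxx j k g) (Or.inr ⟨j, k, fun h => hk (by rw [h]), rfl⟩)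
    rw [var_congr fun p hp => pdxx_congr_on hO j k e p (hsub hp)] at this
    exact this
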